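/- arXiv:1609.00617 — 12 statements merged into one kernel-verified Lean document; each statement's English description precedes it below -/
import Mathlib

section
/- Let ω>0, p∈(1,2) be real constants and let g:(0,∞)→ℝ be twice differentiable with g''(d)≥0 for all d>0. Then for all v1,v2>0 with v1≠v2, the quantity (Φ,2(v1,v2)−Φ,1(v1,v2))/(v2−v1) + Φ,12(v1,v2) equals ωp(v1²+v2²)^{p/2-2}(v1²+v2²+(p−2)v1v2) + v1v2·g''(v1v2), and this quantity is strictly positive. -/
/-!
Write `S = v₁² + v₂²` and `d = v₁v₂`. The chain rule gives
`Φ,1 = ωp v₁ S^{p/2-1} + v₂ g'(d)` and symmetrically for `Φ,2`, so the divided difference is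
`ωp S^{p/2-1} - g'(d)`. Differentiating `Φ,1` in `v₂` gives
`Φ,12 = ωp(p-2) d S^{p/2-2} + g'(d) + d g''(d)`. In the sum `g'(d)` cancels, and factoring
`S^{p/2-1} = S · S^{p/2-2}` yields the formula. It is positive because `p - 2 > -1`, so that
`S + (p-2)d > v₁² + v₂² - v₁v₂ > 0`, while `g'' ≥ 0`.
-/

open Real Set

/-- The stored energy density `Φ(v₁,v₂) = ω(v₁²+v₂²)^{p/2} + g(v₁v₂)`. -/
noncomputable def Phi (ω p : ℝ) (g : ℝ → ℝ) (v1 v2 : ℝ) : ℝ :=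
  ω * (v1 ^ 2 + v2 ^ 2) ^ (p / 2) + g (v1 * v2)

/-- First partial derivative `Φ,1`. -/
noncomputable def Phi1 (ω p : ℝ) (g : ℝ → ℝ) (v1 v2 : ℝ) : ℝ :=
  deriv (fun t => Phi ω p g t v2) v1

/-- First partial derivative `Φ,2`. -/
noncomputable def Phi2 (ω p : ℝ) (g : ℝ → ℝ) (v1 v2 : ℝ) : ℝ :=
  deriv (fun t => Phi ω p g v1 t) v2

/-- Mixed second partial derivative `Φ,12`. -/
noncomputable def Phi12 (ω p : ℝ) (g : ℝ → ℝ) (v1 v2 : ℝ) : ℝ :=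
  deriv (fun t => Phi1 ω p g v1 t) v2

lemma hasDerivAt_rpow_sq_add_sq (q a b : ℝ) (ha : 0 < a) :
    HasDerivAt (fun t : ℝ => (t ^ 2 + b ^ 2) ^ q) (2 * q * a * (a ^ 2 + b ^ 2) ^ (q - 1)) a := by
  have h1 : HasDerivAt (fun t : ℝ => t ^ 2 + b ^ 2) (2 * a) a := by
    simpa using ((hasDerivAt_id a).pow 2).add_const (b ^ 2)
  have hS : a ^ 2 + b ^ 2 ≠ 0 := by positivity
  exact (h1.rpow_const (p := q) (Or.inl hS)).congr_deriv (by ring)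

lemma hasDerivAt_comp_mul_right {f : ℝ → ℝ} {a b : ℝ} (hf : DifferentiableAt ℝ f (a * b)) :
    HasDerivAt (fun t : ℝ => f (t * b)) (b * deriv f (a * b)) a := by
  have h1 : HasDerivAt (fun t : ℝ => t * b) b a := by
    simpa using (hasDerivAt_id a).mul_const b
  exact (hf.hasDerivAt.comp a h1).congr_deriv (by ring)

lemma Phi1_eq (ω p : ℝ) (g : ℝ → ℝ) (hg : ∀ d : ℝ, 0 < d → DifferentiableAt ℝ g d)
    {a b : ℝ} (ha : 0 < a) (hb : 0 < b) :
    Phi1 ω p g a b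
      = ω * p * a * (a ^ 2 + b ^ 2) ^ (p / 2 - 1) + b * deriv g (a * b) := by
  have h := ((hasDerivAt_rpow_sq_add_sq (p / 2) a b ha).const_mul ω).add
    (hasDerivAt_comp_mul_right (hg (a * b) (mul_pos ha hb)))
  refine Eq.trans h.deriv ?_
  ring

lemma Phi_comm (ω p : ℝ) (g : ℝ → ℝ) (a b : ℝ) : Phi ω p g a b = Phi ω p g b a := by
  rw [Phi, Phi, add_comm (a ^ 2), mul_comm a b]

lemma Phi2_eq_Phi1_swap (ω p : ℝ) (g : ℝ → ℝ) (a b : ℝ) :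
    Phi2 ω p g a b = Phi1 ω p g b a := by
  simp only [Phi2, Phi1, Phi_comm ω p g a]

lemma Phi12_eq (ω p : ℝ) (g : ℝ → ℝ) (hg1 : ∀ d : ℝ, 0 < d → DifferentiableAt ℝ g d)
    (hg2 : ∀ d : ℝ, 0 < d → DifferentiableAt ℝ (deriv g) d)
    {a b : ℝ} (ha : 0 < a) (hb : 0 < b) :
    Phi12 ω p g a b
      = ω * p * (p - 2) * (a * b) * (a ^ 2 + b ^ 2) ^ (p / 2 - 2)
        + deriv g (a * b) + a * b * deriv (deriv g) (a * b) := by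
  -- The formula for `Φ,1` holds only for positive arguments, hence the eventual equality near `b`.
  have hev : (fun t => Phi1 ω p g a t) =ᶠ[nhds b] fun t =>
      ω * p * a * (t ^ 2 + a ^ 2) ^ (p / 2 - 1) + t * deriv g (t * a) := by
    filter_upwards [lt_mem_nhds hb] with t ht
    rw [Phi1_eq ω p g hg1 ha ht, add_comm (t ^ 2), mul_comm t a]
  have hd : DifferentiableAt ℝ (deriv g) (b * a) := hg2 _ (mul_pos hb ha)
  have h := ((hasDerivAt_rpow_sq_add_sq (p / 2 - 1) b a hb).const_mul (ω * p * a)).add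
    ((hasDerivAt_id b).mul (hasDerivAt_comp_mul_right hd))
  refine (hev.deriv_eq.trans h.deriv).trans ?_
  rw [show p / 2 - 1 - 1 = p / 2 - 2 by ring, add_comm (b ^ 2), mul_comm b a]
  simp only [id]
  ring

theorem stmt1 (ω p : ℝ) (hω : 0 < ω) (hp1 : 1 < p) (hp2 : p < 2)
    (g : ℝ → ℝ)
    (hg1 : ∀ d : ℝ, 0 < d → DifferentiableAt ℝ g d)
    (hg2 : ∀ d : ℝ, 0 < d → DifferentiableAt ℝ (deriv g) d)
    (hg'' : ∀ d : ℝ, 0 < d → 0 ≤ deriv (deriv g) d) :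
    ∀ v1 v2 : ℝ, 0 < v1 → 0 < v2 → v1 ≠ v2 →
      (Phi2 ω p g v1 v2 - Phi1 ω p g v1 v2) / (v2 - v1) + Phi12 ω p g v1 v2
          = ω * p * (v1 ^ 2 + v2 ^ 2) ^ (p / 2 - 2)
              * (v1 ^ 2 + v2 ^ 2 + (p - 2) * v1 * v2)
            + v1 * v2 * deriv (deriv g) (v1 * v2) ∧
      0 < ω * p * (v1 ^ 2 + v2 ^ 2) ^ (p / 2 - 2)
              * (v1 ^ 2 + v2 ^ 2 + (p - 2) * v1 * v2)
            + v1 * v2 * deriv (deriv g) (v1 * v2) := by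
  intro v1 v2 h1 h2 hne
  have hS : 0 < v1 ^ 2 + v2 ^ 2 := by positivity
  have hsub : v2 - v1 ≠ 0 := sub_ne_zero.mpr hne.symm
  constructor
  · have hpow : (v1 ^ 2 + v2 ^ 2) ^ (p / 2 - 1)
        = (v1 ^ 2 + v2 ^ 2) ^ (p / 2 - 2) * (v1 ^ 2 + v2 ^ 2) := by
      rw [← Real.rpow_add_one hS.ne']
      congr 1
      ring
    rw [Phi2_eq_Phi1_swap, Phi1_eq ω p g hg1 h2 h1, Phi1_eq ω p g hg1 h1 h2,
      Phi12_eq ω p g hg1 hg2 h1 h2, add_comm (v2 ^ 2), mul_comm v2 v1, hpow]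
    field_simp
    ring
  · have hd : 0 < v1 * v2 := mul_pos h1 h2
    have hq : 0 < v1 ^ 2 + v2 ^ 2 + (p - 2) * v1 * v2 := by
      nlinarith [sq_nonneg (v1 - v2), mul_pos (sub_pos.mpr hp1) hd]
    have hr : 0 < (v1 ^ 2 + v2 ^ 2) ^ (p / 2 - 2) := Real.rpow_pos_of_pos hS _
    have hp : 0 < p := by linarith
    have hg := hg'' _ hd
    positivity
end

section
/- Let ω>0, p>0 be real constants and let g:(0,∞)→ℝ be differentiable and strictly convex, and suppose d0>0 is a zero of g'. Let ϱ>0 and let r(ϱ)>0, r'(ϱ)>0 satisfy the natural (traction-free) boundary condition ωp·(r'(ϱ)²+(r(ϱ)/ϱ)²)^{p/2−1}·(r'(ϱ)ϱ/r(ϱ)) + g'(r(ϱ)r'(ϱ)/ϱ) = 0. Then d(ϱ) := r(ϱ)r'(ϱ)/ϱ < d0; consequently, if r(ϱ) ≥ r_c > 0 and ϱ < r_c/√d0, then r'(ϱ) < r(ϱ)/ϱ. -/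
/-!
Every factor of the first term of the boundary condition is positive, so `g' (d) < 0 = g' (d0)`
at `d = r r' / ϱ`; since `g` is convex, `g'` is monotone, which forces `d < d0`.
If moreover `r' ≥ r / ϱ`, then `d ≥ (r / ϱ) ^ 2 ≥ (rc / ϱ) ^ 2`, and the right-hand side exceeds
`d0` as soon as `ϱ < rc / √d0`, contradicting the first claim.
-/

open Real Set

theorem stmt4 (ω p : ℝ) (hω : 0 < ω) (hp : 0 < p)
    (g : ℝ → ℝ)
    (hg : ∀ d : ℝ, 0 < d → DifferentiableAt ℝ g d)
    (hconv : StrictConvexOn ℝ (Set.Ioi 0) g)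
    (d0 : ℝ) (hd0 : 0 < d0) (hgd0 : deriv g d0 = 0)
    (ϱ rϱ r'ϱ : ℝ) (hϱ : 0 < ϱ) (hr : 0 < rϱ) (hr' : 0 < r'ϱ)
    (hBC : ω * p * (r'ϱ ^ 2 + (rϱ / ϱ) ^ 2) ^ (p / 2 - 1) * (r'ϱ * ϱ / rϱ)
            + deriv g (rϱ * r'ϱ / ϱ) = 0) :
    rϱ * r'ϱ / ϱ < d0 ∧
      ∀ rc : ℝ, 0 < rc → rc ≤ rϱ → ϱ < rc / Real.sqrt d0 → r'ϱ < rϱ / ϱ := by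
  have hd : 0 < rϱ * r'ϱ / ϱ := by positivity
  have hpos : 0 < ω * p * (r'ϱ ^ 2 + (rϱ / ϱ) ^ 2) ^ (p / 2 - 1) * (r'ϱ * ϱ / rϱ) := by
    positivity
  have hlt : rϱ * r'ϱ / ϱ < d0 := by
    by_contra! hge
    have hmono := hconv.convexOn.monotoneOn_deriv (fun x hx => hg x hx) hd0 hd hge
    linarith
  refine ⟨hlt, fun rc _ hrc hϱlt => ?_⟩
  by_contra! hge
  have hsqrt : √d0 < rϱ / ϱ := by
    rw [lt_div_iff₀ (Real.sqrt_pos.2 hd0)] at hϱlt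
    rw [lt_div_iff₀ hϱ]
    linarith
  have hsq : d0 < (rϱ / ϱ) ^ 2 := (Real.sqrt_lt' (by positivity)).1 hsqrt
  have hle : (rϱ / ϱ) ^ 2 ≤ rϱ * r'ϱ / ϱ := by
    calc (rϱ / ϱ) ^ 2 = rϱ / ϱ * (rϱ / ϱ) := sq _
      _ ≤ rϱ / ϱ * r'ϱ := by gcongr
      _ = rϱ * r'ϱ / ϱ := by ring
  linarith
end

section
/- Let ω>0, p∈(1,2) be real constants and let g:(0,∞)→ℝ be differentiable and strictly convex. Let 0<ϱ<1, 0<r_c≤λ, and let r:[ϱ,1]→ℝ be differentiable with r_c ≤ r(R) ≤ λ and 0 < r'(R)·R < r(R) for all R∈[ϱ,1]. Suppose the radial Cauchy stress is nonnegative, i.e. ωp·(r'(R)²+(r(R)/R)²)^{p/2−1}·(r'(R)R/r(R)) + g'(r(R)r'(R)/R) ≥ 0 for all R∈[ϱ,1]. If d_−>0 satisfies g'(d_−) = −ωp·r_c^{p−2}, then r(R)r'(R)/R ≥ d_− and hence r'(R) ≥ (d_−/λ)·R for all R∈[ϱ,1]. -/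
/-! Write `d = r R * r' R / R`. Because `R ≤ 1` and `p < 2`, the power in the radial stress is
at most `rc ^ (p - 2)`, while the factor `r' R * R / r R` is strictly below `1`. Nonnegativity of
the stress therefore gives the strict inequality `deriv g d > -(ω * p * rc ^ (p - 2)) = deriv g dm`,
and monotonicity of `deriv g` (`ConvexOn.monotoneOn_deriv`) forces `dm ≤ d`. The bound on `r' R`
follows from `r R ≤ Λ`. -/

open Real Set

theorem stmt5 (ω p : ℝ) (hω : 0 < ω) (hp1 : 1 < p) (hp2 : p < 2)
    (g : ℝ → ℝ)
    (hg : ∀ d : ℝ, 0 < d → DifferentiableAt ℝ g d)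
    (hconv : StrictConvexOn ℝ (Set.Ioi 0) g)
    (ϱ rc Λ : ℝ) (hϱ0 : 0 < ϱ) (hϱ1 : ϱ < 1) (hrc : 0 < rc) (hrcΛ : rc ≤ Λ)
    (r r' : ℝ → ℝ)
    (hderiv : ∀ R ∈ Set.Icc ϱ 1, HasDerivWithinAt r (r' R) (Set.Icc ϱ 1) R)
    (hrbd : ∀ R ∈ Set.Icc ϱ 1, rc ≤ r R ∧ r R ≤ Λ)
    (hr' : ∀ R ∈ Set.Icc ϱ 1, 0 < r' R * R ∧ r' R * R < r R)
    (hT : ∀ R ∈ Set.Icc ϱ 1,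
      0 ≤ ω * p * ((r' R) ^ 2 + (r R / R) ^ 2) ^ (p / 2 - 1) * (r' R * R / r R)
          + deriv g (r R * r' R / R))
    (dm : ℝ) (hdm : 0 < dm) (hgdm : deriv g dm = -(ω * p * rc ^ (p - 2))) :
    ∀ R ∈ Set.Icc ϱ 1, dm ≤ r R * r' R / R ∧ dm / Λ * R ≤ r' R := by
  intro R hR
  obtain ⟨hrcR, hRΛ⟩ := hrbd R hR
  obtain ⟨hpos, hlt⟩ := hr' R hR
  have hR0 : 0 < R := hϱ0.trans_le hR.1
  have hr0 : 0 < r R := hrc.trans_le hrcR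
  have hr'0 : 0 < r' R := pos_of_mul_pos_left hpos hR0.le
  have hd0 : 0 < r R * r' R / R := by positivity
  -- Since `R ≤ 1`, the circumferential stretch `r R / R` is at least `rc`.
  have hstretch : rc ≤ r R / R := hrcR.trans (le_div_self hr0.le hR0 hR.2)
  -- The exponent `p / 2 - 1` is negative, so the lower bound on the base reverses.
  have hpow : ((r' R) ^ 2 + (r R / R) ^ 2) ^ (p / 2 - 1) ≤ rc ^ (p - 2) := by
    have hrw : rc ^ (p - 2) = (rc ^ 2) ^ (p / 2 - 1) := by
      rw [← Real.rpow_natCast_mul hrc.le]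
      congr 1
      push_cast
      ring
    rw [hrw]
    refine Real.rpow_le_rpow_of_nonpos (by positivity) ?_ (by linarith)
    nlinarith [sq_nonneg (r' R)]
  have hq : r' R * R / r R < 1 := (div_lt_one hr0).2 hlt
  have hωp : 0 < ω * p := mul_pos hω (by linarith)
  have hterm : ω * p * ((r' R) ^ 2 + (r R / R) ^ 2) ^ (p / 2 - 1) * (r' R * R / r R)
      < ω * p * rc ^ (p - 2) := by
    have hS : 0 < ω * p * ((r' R) ^ 2 + (r R / R) ^ 2) ^ (p / 2 - 1) := by positivity
    exact (mul_lt_of_lt_one_right hS hq).trans_le (mul_le_mul_of_nonneg_left hpow hωp.le)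
  have hdm_le : dm ≤ r R * r' R / R := by
    by_contra! hcon
    have hmono : deriv g (r R * r' R / R) ≤ deriv g dm :=
      hconv.convexOn.monotoneOn_deriv (fun x hx => hg x hx) hd0 hdm hcon.le
    linarith [hT R hR]
  refine ⟨hdm_le, ?_⟩
  have hΛ : 0 < Λ := hrc.trans_le hrcΛ
  rw [div_mul_eq_mul_div, div_le_iff₀ hΛ]
  rw [le_div_iff₀ hR0] at hdm_le
  nlinarith
end

section
/- Let ω>0, p∈(1,2) be real constants and let g:(0,∞)→ℝ be differentiable and strictly convex. Let 0<ϱ<1, r_c>0, and let r, r0:[ϱ,1]→ℝ be differentiable with r(R) ≥ r_c, r'(R)>0, r0(R) ≥ r_c, and 0 < r0'(R) < r0(R)/R for all R∈[ϱ,1]. Define T(R) = ωp(r'(R)²+(r(R)/R)²)^{p/2−1}·r'(R)R/r(R) + g'(r(R)r'(R)/R) and T0(R) analogously with r0 in place of r, and suppose T(R) ≤ T0(R) for all R∈[ϱ,1]. Let d_{0+} ≥ r0(R)r0'(R)/R for all R∈[ϱ,1], and suppose d_+>0 satisfies g'(d_+) = g'(d_{0+}) + ωp·r_c^{p−2}.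 Then r(R)r'(R)/R ≤ d_+ and hence r'(R) ≤ (d_+/r_c)·R for all R∈[ϱ,1]. -/
/-!
At each `R` the term `g'` of the cavity stress `T₀` is at most `g' (d₀₊)`, because `g'` is monotone.
The other term of `T₀` is at most `ω p r_c ^ (p - 2)`: the base of the power is at least
`(r₀ / R) ^ 2 ≥ r_c ^ 2`, the exponent `p / 2 - 1` is negative, and `r₀' R / r₀ < 1`.
Hence `T₀ ≤ g' (d₊)`. The corresponding term of `T` is strictly positive, so
`g' (r r' / R) < T ≤ T₀ ≤ g' (d₊)`, and monotonicity of `g'` gives `r r' / R ≤ d₊`.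
The bound on `r'` then follows from `r_c ≤ r`.
-/

/-- A bound on the `ω`-term of the Cauchy stress (up to the factor `ω p`) for principal stretches
`a < b / R`, with `b ≥ c` and `R ≤ 1`. -/
lemma stress_term_le {p a b c R : ℝ} (hp2 : p < 2) (hc : 0 < c) (hR : 0 < R) (hR1 : R ≤ 1)
    (ha : 0 < a) (hab : a < b / R) (hcb : c ≤ b) :
    (a ^ 2 + (b / R) ^ 2) ^ (p / 2 - 1) * (a * R / b) ≤ c ^ (p - 2) := by
  have hb : 0 < b := hc.trans_le hcb
  have hcR : c ≤ b / R := by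
    rw [le_div_iff₀ hR]; nlinarith
  have hbase : c ^ 2 ≤ a ^ 2 + (b / R) ^ 2 := by
    have := pow_le_pow_left₀ hc.le hcR 2
    nlinarith [sq_nonneg a]
  have hpow : (a ^ 2 + (b / R) ^ 2) ^ (p / 2 - 1) ≤ c ^ (p - 2) := by
    calc (a ^ 2 + (b / R) ^ 2) ^ (p / 2 - 1) ≤ (c ^ 2) ^ (p / 2 - 1) :=
          Real.rpow_le_rpow_of_nonpos (by positivity) hbase (by linarith)
      _ = c ^ (p - 2) := by
          rw [← Real.rpow_natCast, ← Real.rpow_mul hc.le]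
          congr 1; push_cast; ring
  have hfrac : a * R / b ≤ 1 := by
    rw [div_le_one hb]; exact ((lt_div_iff₀ hR).1 hab).le
  calc _ ≤ (a ^ 2 + (b / R) ^ 2) ^ (p / 2 - 1) * 1 := by gcongr
    _ ≤ _ := by rw [mul_one]; exact hpow

theorem stmt6 (ω p : ℝ) (hω : 0 < ω) (hp1 : 1 < p) (hp2 : p < 2)
    (g : ℝ → ℝ)
    (hg : ∀ d : ℝ, 0 < d → DifferentiableAt ℝ g d)
    (hconv : StrictConvexOn ℝ (Set.Ioi 0) g)
    (ϱ rc : ℝ) (hϱ0 : 0 < ϱ) (hϱ1 : ϱ < 1) (hrc : 0 < rc)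
    (r r' r0 r0' : ℝ → ℝ)
    (hderiv : ∀ R ∈ Set.Icc ϱ 1, HasDerivWithinAt r (r' R) (Set.Icc ϱ 1) R)
    (hderiv0 : ∀ R ∈ Set.Icc ϱ 1, HasDerivWithinAt r0 (r0' R) (Set.Icc ϱ 1) R)
    (hrbd : ∀ R ∈ Set.Icc ϱ 1, rc ≤ r R)
    (hr' : ∀ R ∈ Set.Icc ϱ 1, 0 < r' R)
    (hr0bd : ∀ R ∈ Set.Icc ϱ 1, rc ≤ r0 R)
    (hr0' : ∀ R ∈ Set.Icc ϱ 1, 0 < r0' R ∧ r0' R < r0 R / R)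
    (hTT0 : ∀ R ∈ Set.Icc ϱ 1,
      ω * p * ((r' R) ^ 2 + (r R / R) ^ 2) ^ (p / 2 - 1) * (r' R * R / r R)
          + deriv g (r R * r' R / R)
        ≤ ω * p * ((r0' R) ^ 2 + (r0 R / R) ^ 2) ^ (p / 2 - 1) * (r0' R * R / r0 R)
          + deriv g (r0 R * r0' R / R))
    (d0p : ℝ) (hd0p : ∀ R ∈ Set.Icc ϱ 1, r0 R * r0' R / R ≤ d0p)
    (dp : ℝ) (hdp : 0 < dp)
    (hgdp : deriv g dp = deriv g d0p + ω * p * rc ^ (p - 2)) :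
    ∀ R ∈ Set.Icc ϱ 1, r R * r' R / R ≤ dp ∧ r' R ≤ dp / rc * R := by
  intro R hR
  have hR0 : 0 < R := hϱ0.trans_le hR.1
  have hr := hrc.trans_le (hrbd R hR)
  have hr0 := hrc.trans_le (hr0bd R hR)
  have hd := hr' R hR
  obtain ⟨hd0, hlt⟩ := hr0' R hR
  have hωp : 0 < ω * p := mul_pos hω (by linarith)
  have hmono : MonotoneOn (deriv g) (Set.Ioi 0) :=
    hconv.convexOn.monotoneOn_deriv fun d hd => hg d hd
  have hJ : 0 < r R * r' R / R := by positivity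
  have hJ0 : 0 < r0 R * r0' R / R := by positivity
  have hg0 := hmono hJ0 (hJ0.trans_le (hd0p R hR)) (hd0p R hR)
  have hterm := mul_le_mul_of_nonneg_left
    (stress_term_le hp2 hrc hR0 hR.2 hd0 hlt (hr0bd R hR)) hωp.le
  have hpos : 0 < ω * p * ((r' R) ^ 2 + (r R / R) ^ 2) ^ (p / 2 - 1) * (r' R * R / r R) := by
    positivity
  have hJle : r R * r' R / R ≤ dp := by
    by_contra! hcon
    have hle := hmono hdp hJ hcon.le
    have hT := hTT0 R hR
    rw [← mul_assoc] at hterm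
    linarith
  refine ⟨hJle, ?_⟩
  rw [div_le_iff₀ hR0] at hJle
  rw [div_mul_eq_mul_div, le_div_iff₀ hrc]
  nlinarith [mul_le_mul_of_nonneg_right (hrbd R hR) hd.le]
end

section
/- Let s:(0,1]→ℝ be twice differentiable with s(t)>0, s'(t)>0 and s''(t)≥0 for all t∈(0,1], and suppose 2s(ε+τ/2) > s(ε+τ). Then the Jacobian determinant of the type-A iso-parametric interpolation map Π_A (with values s0=s(ε), s½=s(ε+τ/2), s1=s(ε+τ)) is strictly positive at every point of the closed reference triangle T̂ if and only if both conditions (A1): −3s0 − s1(2c²−1) + 4s½c > 0 and (A2): −6s1c³ + 4s½c² + (s0+9s1)c − 8s½ > 0 hold, where c = cos(π/(2N)). -/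
/-!
In the coordinates `y = x₁ + x₂`, `z = x₂ - x₁` the Jacobian determinant of `Π_A` is
`2 ((α₂ + 4 (α₁ - s₁σ²) y) (2γ y - β) + 8 s₁ σ² γ z²)`, and the reference triangle is
`|z| ≤ y ≤ 1`. At the origin it is a positive multiple of the first of the two expressions required
to be positive, namely `α₂`, and at the vertex `(1, 0)` it is a positive multiple of the second one
(the cubic in `c`), so both conditions are necessary.

For sufficiency, convexity of `s` gives `2 s½ ≤ s₀ + s₁`. If `γ ≥ 0`, the `z²` term only helps and
the two affine factors in `y` are positive at `y = 0` (by `α₂ > 0` and `s₁ < 2 s½`) and at `y = 1`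
(by convexity of `s`). If `γ < 0`, the determinant is smallest on the edges `|z| = y`; there it is a
quadratic in `y` with leading coefficient `16 α₁ γ < 0`, hence concave, and it is positive at
`y = 0` and `y = 1` by the two conditions.
-/

open Real Set

/-- The closed reference triangle `T̂`. -/
def Tref : Set (ℝ × ℝ) := {x | 0 ≤ x.1 ∧ 0 ≤ x.2 ∧ x.1 + x.2 ≤ 1}

/-- The Jacobian determinant of a map `ℝ² → ℝ²` at a point: the determinant of
its total (Fréchet) derivative there. -/
noncomputable def jacDet (f : ℝ × ℝ → ℝ × ℝ) (x : ℝ × ℝ) : ℝ :=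
  LinearMap.det ((fderiv ℝ f x).toLinearMap)

/-- The type-A iso-parametric interpolation map `Π_A`, built from the values
`s0, s½, s1` and `c = cos(π/2N)`, `σ = sin(π/2N)`:
`Π_A(x₁,x₂) = (s0 + α₂ y + 2α₁ y² − 4 s1 σ² (x₁²+x₂²), (2γ y − β)(x₂−x₁))`
with `y = x₁+x₂`, `α₁ = s0+s1−2s½c`, `α₂ = −3s0−s1(2c²−1)+4s½c`,
`β = 2σ(s1 c − 2s½)`, `γ = 2σ(s1 c − s½)`. -/
noncomputable def PiA (s0 sh s1 c σ : ℝ) (x : ℝ × ℝ) : ℝ × ℝ :=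
  (s0 + (-3 * s0 - s1 * (2 * c ^ 2 - 1) + 4 * sh * c) * (x.1 + x.2)
      + 2 * (s0 + s1 - 2 * sh * c) * (x.1 + x.2) ^ 2
      - 4 * s1 * σ ^ 2 * (x.1 ^ 2 + x.2 ^ 2),
    (2 * (2 * σ * (s1 * c - sh)) * (x.1 + x.2) - 2 * σ * (s1 * c - 2 * sh))
      * (x.2 - x.1))

lemma jacDet_PiA (s0 sh s1 c σ : ℝ) (x : ℝ × ℝ) :
    jacDet (PiA s0 sh s1 c σ) x =
      2 * (((-3 * s0 - s1 * (2 * c ^ 2 - 1) + 4 * sh * c)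
            + 4 * ((s0 + s1 - 2 * sh * c) - s1 * σ ^ 2) * (x.1 + x.2))
          * (2 * (2 * σ * (s1 * c - sh)) * (x.1 + x.2) - 2 * σ * (s1 * c - 2 * sh))
        + 8 * s1 * σ ^ 2 * (2 * σ * (s1 * c - sh)) * (x.2 - x.1) ^ 2) := by
  have h1 : HasFDerivAt (fun p : ℝ × ℝ => p.1) (ContinuousLinearMap.fst ℝ ℝ ℝ) x := hasFDerivAt_fst
  have h2 : HasFDerivAt (fun p : ℝ × ℝ => p.2) (ContinuousLinearMap.snd ℝ ℝ ℝ) x := hasFDerivAt_snd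
  have hy := h1.add h2
  have hA := (((hy.const_mul (-3 * s0 - s1 * (2 * c ^ 2 - 1) + 4 * sh * c)).const_add s0).add
    ((hy.pow 2).const_mul (2 * (s0 + s1 - 2 * sh * c)))).sub
    (((h1.pow 2).add (h2.pow 2)).const_mul (4 * s1 * σ ^ 2))
  have hB := ((hy.const_mul (2 * (2 * σ * (s1 * c - sh)))).sub_const
    (2 * σ * (s1 * c - 2 * sh))).mul (h2.sub h1)
  have hF : fderiv ℝ (PiA s0 sh s1 c σ) x = _ := (hA.prodMk hB).fderiv
  rw [jacDet, hF, ← LinearMap.det_toMatrix (Module.Basis.finTwoProd ℝ), Matrix.det_fin_two]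
  simp [LinearMap.toMatrix_apply]
  ring

/-- The sufficiency argument, in the coordinates `y = x₁ + x₂`, `z = x₂ - x₁`; the common factor
`2σ` of `β` and `γ` is divided out and `σ²` is written as `1 - c²`. -/
lemma reduced_pos {s0 sh s1 c y z : ℝ} (hsh : 0 < sh) (hs1 : 0 < s1) (hc0 : 0 < c) (hc1 : c < 1)
    (hconv : 2 * sh ≤ s0 + s1) (h2 : s1 < 2 * sh) (hy0 : 0 ≤ y) (hy1 : y ≤ 1)
    (hz : z ^ 2 ≤ y ^ 2)
    (A1 : 0 < -3 * s0 - s1 * (2 * c ^ 2 - 1) + 4 * sh * c)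
    (A2 : 0 < -6 * s1 * c ^ 3 + 4 * sh * c ^ 2 + (s0 + 9 * s1) * c - 8 * sh) :
    0 < ((-3 * s0 - s1 * (2 * c ^ 2 - 1) + 4 * sh * c)
            + 4 * ((s0 + s1 - 2 * sh * c) - s1 * (1 - c ^ 2)) * y)
          * (2 * (s1 * c - sh) * y - (s1 * c - 2 * sh))
        + 8 * s1 * (1 - c ^ 2) * (s1 * c - sh) * z ^ 2 := by
  have hα1 : 0 < s0 + s1 - 2 * sh * c := by nlinarith
  have hβ : 0 < 2 * sh - s1 * c := by nlinarith
  have hsc : 0 < s1 * c := mul_pos hs1 hc0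
  have hσ : 0 < s1 * (1 - c ^ 2) := mul_pos hs1 (by nlinarith)
  set a := -3 * s0 - s1 * (2 * c ^ 2 - 1) + 4 * sh * c with ha
  -- Each affine factor is a convex combination of its values at `y = 0` and `y = 1`.
  have hconvex : ∀ {u v : ℝ}, 0 < u → 0 < v → 0 < (1 - y) * u + y * v := by
    intro u v hu hv
    rcases hy0.eq_or_lt with h | h
    · subst h; simpa using hu
    · have := mul_pos h hv
      have := mul_nonneg (sub_nonneg.2 hy1) hu.le
      linarith
  rcases le_or_gt sh (s1 * c) with hγ | hγ
  · have hend : 0 < s0 + s1 * (2 * c ^ 2 + 1) - 4 * sh * c := by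
      nlinarith [mul_pos hsh (sub_pos.2 hc1), mul_nonneg hc0.le (sub_nonneg.2 hγ)]
    have e1 := hconvex A1 hend
    have e2 := hconvex hβ hsc
    have e3 : 0 ≤ 8 * (s1 * (1 - c ^ 2)) * (s1 * c - sh) * z ^ 2 :=
      mul_nonneg (mul_nonneg (by linarith) (by linarith)) (sq_nonneg z)
    have e4 := mul_pos e1 e2
    rw [ha] at *
    linear_combination e4 + e3
  · have e3 : 0 ≤ 8 * (s1 * (1 - c ^ 2)) * (sh - s1 * c) * (y ^ 2 - z ^ 2) :=
      mul_nonneg (mul_nonneg (by linarith) (by linarith)) (by linarith)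
    -- A quadratic equals the chord through its values at `0` and `1` minus
    -- `y (1 - y)` times its leading coefficient.
    have e1 := hconvex (mul_pos A1 hβ) (mul_pos hs1 A2)
    have e2 : 0 ≤ 8 * ((s0 + s1 - 2 * sh * c) * (sh - s1 * c)) * (y * (1 - y)) :=
      mul_nonneg (by have := mul_pos hα1 (sub_pos.2 hγ); linarith)
        (mul_nonneg hy0 (by linarith))
    rw [ha] at *
    linear_combination e1 + e2 + e3

theorem stmt7 (ε τ : ℝ) (hε : 0 < ε) (hτ : 0 < τ) (hετ : ε + τ ≤ 1)
    (N : ℕ) (hN : 2 ≤ N)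
    (s s' s'' : ℝ → ℝ)
    (hds : ∀ t ∈ Set.Ioc (0 : ℝ) 1, HasDerivWithinAt s (s' t) (Set.Ioc 0 1) t)
    (hds' : ∀ t ∈ Set.Ioc (0 : ℝ) 1, HasDerivWithinAt s' (s'' t) (Set.Ioc 0 1) t)
    (hs : ∀ t ∈ Set.Ioc (0 : ℝ) 1, 0 < s t)
    (hs' : ∀ t ∈ Set.Ioc (0 : ℝ) 1, 0 < s' t)
    (hs'' : ∀ t ∈ Set.Ioc (0 : ℝ) 1, 0 ≤ s'' t)
    (h2 : s (ε + τ) < 2 * s (ε + τ / 2))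
    (s0 sh s1 c σ : ℝ)
    (hs0 : s0 = s ε) (hsh : sh = s (ε + τ / 2)) (hs1 : s1 = s (ε + τ))
    (hc : c = Real.cos (Real.pi / (2 * (N : ℝ))))
    (hσ : σ = Real.sin (Real.pi / (2 * (N : ℝ)))) :
    (∀ x ∈ Tref, 0 < jacDet (PiA s0 sh s1 c σ) x) ↔
      (0 < -3 * s0 - s1 * (2 * c ^ 2 - 1) + 4 * sh * c ∧
        0 < -6 * s1 * c ^ 3 + 4 * sh * c ^ 2 + (s0 + 9 * s1) * c - 8 * sh) := by
  have hN' : (2 : ℝ) ≤ N := by exact_mod_cast hN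
  have hθ0 : 0 < Real.pi / (2 * (N : ℝ)) := by positivity
  have hθ1 : Real.pi / (2 * (N : ℝ)) < Real.pi / 2 := by
    apply div_lt_div_of_pos_left Real.pi_pos <;> linarith
  have hc0 : 0 < c := hc ▸ Real.cos_pos_of_mem_Ioo ⟨by linarith [Real.pi_pos], hθ1⟩
  have hσ0 : 0 < σ := hσ ▸ Real.sin_pos_of_pos_of_lt_pi hθ0 (by linarith [Real.pi_pos])
  have hσc : σ ^ 2 = 1 - c ^ 2 := by rw [hσ, hc]; exact Real.sin_sq _
  have hc1 : c < 1 := by nlinarith [pow_pos hσ0 2]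
  have hm0 : ε ∈ Set.Ioc (0 : ℝ) 1 := ⟨hε, by linarith⟩
  have hmh : ε + τ / 2 ∈ Set.Ioc (0 : ℝ) 1 := ⟨by linarith, by linarith⟩
  have hm1 : ε + τ ∈ Set.Ioc (0 : ℝ) 1 := ⟨by linarith, hετ⟩
  have hconv : 2 * sh ≤ s0 + s1 := by
    have hcx : ConvexOn ℝ (Set.Ioc (0 : ℝ) 1) s :=
      convexOn_of_hasDerivWithinAt2_nonneg (convex_Ioc 0 1)
        (fun t ht => (hds t ht).continuousWithinAt)
        (fun t ht => (hds t (interior_subset ht)).mono interior_subset)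
        (fun t ht => (hds' t (interior_subset ht)).mono interior_subset)
        (fun t ht => hs'' t (interior_subset ht))
    have h := hcx.2 hm0 hm1 (by norm_num : (0 : ℝ) ≤ 1 / 2) (by norm_num : (0 : ℝ) ≤ 1 / 2)
      (by norm_num)
    simp only [smul_eq_mul] at h
    rw [show 1 / 2 * ε + 1 / 2 * (ε + τ) = ε + τ / 2 by ring] at h
    rw [hs0, hsh, hs1]
    linarith
  have hshp : 0 < sh := hsh ▸ hs _ hmh
  have hs1p : 0 < s1 := hs1 ▸ hs _ hm1
  rw [← hs1, ← hsh] at h2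
  have hβ : 0 < 2 * sh - s1 * c := by nlinarith
  constructor
  · intro h
    constructor
    · have h0 := h (0, 0) ⟨le_rfl, le_rfl, by norm_num⟩
      rw [jacDet_PiA] at h0
      refine pos_of_mul_pos_left (b := 4 * σ * (2 * sh - s1 * c)) ?_ (by positivity)
      linear_combination h0
    · have h1 := h (1, 0) ⟨zero_le_one, le_rfl, by norm_num⟩
      rw [jacDet_PiA, hσc] at h1
      refine pos_of_mul_pos_left (b := 4 * σ * s1) ?_ (by positivity)
      linear_combination h1
  · rintro ⟨A1, A2⟩ ⟨x1, x2⟩ ⟨hx1, hx2, hx⟩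
    simp only at hx1 hx2 hx
    have key := reduced_pos (y := x1 + x2) (z := x2 - x1) hshp hs1p hc0 hc1 hconv h2
      (by linarith) hx (by nlinarith [mul_nonneg hx1 hx2]) A1 A2
    rw [jacDet_PiA, hσc]
    have := mul_pos (mul_pos four_pos hσ0) key
    linear_combination this
end

section
/- Let s:(0,1]→ℝ be twice differentiable with s(t)>0, s'(t)>0 and s''(t)≥0 for all t∈(0,1], and suppose 2s(ε+τ/2) > s(ε+τ). Then the Jacobian determinant of the type-B iso-parametric interpolation map Π_B (with values s0=s(ε), s½=s(ε+τ/2), s1=s(ε+τ)) is strictly positive at every point of the closed reference triangle T̂ if and only if condition (B1): 2s0c² − 4s½c + s0 + s1 < 0 holds, where c = cos(π/(2N)). -/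
/-!
Write `y = x₁ + x₂` and `z = x₁ - x₂`. In these coordinates the Jacobian determinant of `Π_B` is
`-2 (A(y) B(y) + 8 s₀ σ² γ̄ z²)`, with the affine functions
`A(y) = ᾱ₂ + 4 (ᾱ₁ - s₀ σ²) y` and `B(y) = 2 γ̄ y - β̄` (`jacDet_PiB`).

On `0 ≤ y ≤ 1` the factor `B` is positive, since `B(0) = 2σ(2s½ - s₀c)` and `B(1) = 2σ s₀ c`, and
`γ̄ < 0` because `s₀c ≤ s₀ < s½`. Hence the `z²` term only helps, and the determinant is positive
on the triangle once `A` is negative at both ends of `[0, 1]`. The value `A(1)` is the left side of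
(B1), and `A(0) = ᾱ₂ < 0` always holds by the convexity bound `2 s½ ≤ s₀ + s₁` (`alpha2_neg`).
Conversely, at `(1/2, 1/2)`, where `y = 1` and `z = 0`, the determinant is `-2 A(1) B(1)`, so its
positivity there forces (B1).
-/

open Real Set

/-- The type-B iso-parametric interpolation map `Π_B`, built from the values
`s0, s½, s1` and `c = cos(π/2N)`, `σ = sin(π/2N)`:
`Π_B(x₁,x₂) = (s1 + ᾱ₂ y + 2ᾱ₁ y² − 4 s0 σ² (x₁²+x₂²), (2γ̄ y − β̄)(x₁−x₂))`
with `y = x₁+x₂`, `ᾱ₁ = s0+s1−2s½c`, `ᾱ₂ = −3s1−s0(2c²−1)+4s½c`,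
`β̄ = 2σ(s0 c − 2s½)`, `γ̄ = 2σ(s0 c − s½)`. -/
noncomputable def PiB (s0 sh s1 c σ : ℝ) (x : ℝ × ℝ) : ℝ × ℝ :=
  (s1 + (-3 * s1 - s0 * (2 * c ^ 2 - 1) + 4 * sh * c) * (x.1 + x.2)
      + 2 * (s0 + s1 - 2 * sh * c) * (x.1 + x.2) ^ 2
      - 4 * s0 * σ ^ 2 * (x.1 ^ 2 + x.2 ^ 2),
    (2 * (2 * σ * (s0 * c - sh)) * (x.1 + x.2) - 2 * σ * (s0 * c - 2 * sh))
      * (x.1 - x.2))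

theorem det_prod_real (L : ℝ × ℝ →ₗ[ℝ] ℝ × ℝ) :
    LinearMap.det L = (L (1, 0)).1 * (L (0, 1)).2 - (L (0, 1)).1 * (L (1, 0)).2 := by
  rw [← LinearMap.det_toMatrix (Module.Basis.finTwoProd ℝ), Matrix.det_fin_two]
  simp [LinearMap.toMatrix_apply]

theorem jacDet_PiB (s0 sh s1 c σ : ℝ) (x : ℝ × ℝ) :
    jacDet (PiB s0 sh s1 c σ) x =
      -2 * (((-3 * s1 - s0 * (2 * c ^ 2 - 1) + 4 * sh * c)
            + 4 * ((s0 + s1 - 2 * sh * c) - s0 * σ ^ 2) * (x.1 + x.2))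
          * (2 * (2 * σ * (s0 * c - sh)) * (x.1 + x.2) - 2 * σ * (s0 * c - 2 * sh))
        + 8 * s0 * σ ^ 2 * (2 * σ * (s0 * c - sh)) * (x.1 - x.2) ^ 2) := by
  have h1 : HasFDerivAt (fun p : ℝ × ℝ => p.1) (ContinuousLinearMap.fst ℝ ℝ ℝ) x := hasFDerivAt_fst
  have h2 : HasFDerivAt (fun p : ℝ × ℝ => p.2) (ContinuousLinearMap.snd ℝ ℝ ℝ) x := hasFDerivAt_snd
  have hy := h1.add h2
  have hf := ((((hy.const_mul (-3 * s1 - s0 * (2 * c ^ 2 - 1) + 4 * sh * c)).const_add s1).add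
    ((hy.pow 2).const_mul (2 * (s0 + s1 - 2 * sh * c)))).sub
    (((h1.pow 2).add (h2.pow 2)).const_mul (4 * s0 * σ ^ 2)))
  have hg := ((hy.const_mul (2 * (2 * σ * (s0 * c - sh)))).sub_const
    (2 * σ * (s0 * c - 2 * sh))).mul (h1.sub h2)
  have hP : HasFDerivAt (PiB s0 sh s1 c σ) _ x := hf.prodMk hg
  rw [jacDet, hP.fderiv, det_prod_real]
  simp
  ring

/-- The coefficient `ᾱ₂` is negative as soon as `s½` is at most the mean of `s₀ < s₁`. -/
theorem alpha2_neg {s0 sh s1 c : ℝ} (h0 : 0 < s0) (h01 : s0 < s1) (hconv : 2 * sh ≤ s0 + s1)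
    (hc0 : 0 < c) (hc1 : c ≤ 1) :
    -3 * s1 - s0 * (2 * c ^ 2 - 1) + 4 * sh * c < 0 := by
  have e1 : c * (2 * sh) ≤ c * (s0 + s1) := mul_le_mul_of_nonneg_left hconv hc0.le
  have e2 : 0 < (3 - 2 * c) * (s1 - s0) := mul_pos (by linarith) (by linarith)
  have e3 : 0 ≤ s0 * (1 - c) ^ 2 := by positivity
  linarith

theorem stmt8 (ε τ : ℝ) (hε : 0 < ε) (hτ : 0 < τ) (hετ : ε + τ ≤ 1)
    (N : ℕ) (hN : 2 ≤ N)
    (s s' s'' : ℝ → ℝ)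
    (hds : ∀ t ∈ Set.Ioc (0 : ℝ) 1, HasDerivWithinAt s (s' t) (Set.Ioc 0 1) t)
    (hds' : ∀ t ∈ Set.Ioc (0 : ℝ) 1, HasDerivWithinAt s' (s'' t) (Set.Ioc 0 1) t)
    (hs : ∀ t ∈ Set.Ioc (0 : ℝ) 1, 0 < s t)
    (hs' : ∀ t ∈ Set.Ioc (0 : ℝ) 1, 0 < s' t)
    (hs'' : ∀ t ∈ Set.Ioc (0 : ℝ) 1, 0 ≤ s'' t)
    (h2 : s (ε + τ) < 2 * s (ε + τ / 2))
    (s0 sh s1 c σ : ℝ)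
    (hs0 : s0 = s ε) (hsh : sh = s (ε + τ / 2)) (hs1 : s1 = s (ε + τ))
    (hc : c = Real.cos (Real.pi / (2 * (N : ℝ))))
    (hσ : σ = Real.sin (Real.pi / (2 * (N : ℝ)))) :
    (∀ x ∈ Tref, 0 < jacDet (PiB s0 sh s1 c σ) x) ↔
      2 * s0 * c ^ 2 - 4 * sh * c + s0 + s1 < 0 := by
  have hN' : (2 : ℝ) ≤ N := by exact_mod_cast hN
  have hpos : 0 < Real.pi / (2 * (N : ℝ)) := by positivity
  have hlt : Real.pi / (2 * (N : ℝ)) < Real.pi / 2 := by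
    apply div_lt_div_of_pos_left Real.pi_pos <;> linarith
  have hc0 : 0 < c := hc ▸ Real.cos_pos_of_mem_Ioo ⟨by linarith, hlt⟩
  have hc1 : c ≤ 1 := hc ▸ Real.cos_le_one _
  have hσ0 : 0 < σ := hσ ▸ Real.sin_pos_of_pos_of_lt_pi hpos (by linarith [Real.pi_pos])
  have hcσ : σ ^ 2 = 1 - c ^ 2 := by
    rw [hc, hσ]
    linarith [Real.sin_sq_add_cos_sq (Real.pi / (2 * (N : ℝ)))]
  have hcont : ContinuousOn s (Set.Ioc 0 1) := fun t ht => (hds t ht).continuousWithinAt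
  have hsub : interior (Set.Ioc (0 : ℝ) 1) ⊆ Set.Ioc 0 1 := interior_subset
  have hmono : StrictMonoOn s (Set.Ioc 0 1) :=
    strictMonoOn_of_hasDerivWithinAt_pos (convex_Ioc 0 1) hcont
      (fun t ht => (hds t (hsub ht)).mono hsub) (fun t ht => hs' t (hsub ht))
  have hcvx : ConvexOn ℝ (Set.Ioc 0 1) s :=
    convexOn_of_hasDerivWithinAt2_nonneg (convex_Ioc 0 1) hcont
      (fun t ht => (hds t (hsub ht)).mono hsub) (fun t ht => (hds' t (hsub ht)).mono hsub)
      (fun t ht => hs'' t (hsub ht))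
  have m0 : ε ∈ Set.Ioc (0 : ℝ) 1 := ⟨hε, by linarith⟩
  have mh : ε + τ / 2 ∈ Set.Ioc (0 : ℝ) 1 := ⟨by linarith, by linarith⟩
  have m1 : ε + τ ∈ Set.Ioc (0 : ℝ) 1 := ⟨by linarith, by linarith⟩
  have p0 : 0 < s0 := hs0 ▸ hs _ m0
  have l0h : s0 < sh := by rw [hs0, hsh]; exact hmono m0 mh (by linarith)
  have l01 : s0 < s1 := by rw [hs0, hs1]; exact hmono m0 m1 (by linarith)
  have hmid : 2 * sh ≤ s0 + s1 := by
    have h := hcvx.2 m0 m1 (show (0 : ℝ) ≤ 1 / 2 by norm_num)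
      (show (0 : ℝ) ≤ 1 / 2 by norm_num) (by norm_num)
    simp only [smul_eq_mul] at h
    rw [show 1 / 2 * ε + 1 / 2 * (ε + τ) = ε + τ / 2 by ring, ← hs0, ← hsh, ← hs1] at h
    linarith
  have hα2 := alpha2_neg p0 l01 hmid hc0 hc1
  have hs0c : 0 < s0 * c := mul_pos p0 hc0
  have hγ : s0 * c - sh < 0 := by linarith [mul_le_mul_of_nonneg_left hc1 p0.le]
  constructor
  · intro h
    have h := h (1 / 2, 1 / 2) ⟨by norm_num, by norm_num, by norm_num⟩
    rw [jacDet_PiB, hcσ] at h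
    have h' : 0 < -(4 * (σ * (s0 * c))) * (2 * s0 * c ^ 2 - 4 * sh * c + s0 + s1) := by
      convert h using 1
      ring
    have hk := mul_pos hσ0 hs0c
    by_contra hcon
    linarith [mul_nonneg hk.le (not_lt.1 hcon)]
  · rintro hB ⟨a, b⟩ ⟨ha, hb, hab⟩
    simp only at ha hb hab
    rw [jacDet_PiB]
    simp only
    set y := a + b with hy
    have hy0 : 0 ≤ y := by linarith
    -- `A(y)` is a convex combination of `A(0) = ᾱ₂` and `A(1)`, the left side of (B1).
    have hA : (-3 * s1 - s0 * (2 * c ^ 2 - 1) + 4 * sh * c)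
            + 4 * ((s0 + s1 - 2 * sh * c) - s0 * σ ^ 2) * y < 0 := by
      have := convex_Iio (0 : ℝ) hα2 hB (sub_nonneg.2 hab) hy0 (by ring)
      simp only [smul_eq_mul, Set.mem_Iio] at this
      rw [hcσ]
      linarith
    -- `B(y)` is a convex combination of `B(0) = 2σ(2s½ - s₀c)` and `B(1) = 2σs₀c`.
    have hBy : 0 < 2 * (2 * σ * (s0 * c - sh)) * y - 2 * σ * (s0 * c - 2 * sh) := by
      have := convex_Ioi (0 : ℝ) (show 2 * sh - s0 * c ∈ Set.Ioi (0 : ℝ) from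
        Set.mem_Ioi.2 (by linarith)) hs0c (sub_nonneg.2 hab) hy0 (by ring)
      simp only [smul_eq_mul, Set.mem_Ioi] at this
      linarith [mul_pos hσ0 this]
    have hz : 0 ≤ (s0 * σ ^ 2 * σ * (a - b) ^ 2) * -(s0 * c - sh) :=
      mul_nonneg (by positivity) (by linarith)
    linarith [mul_neg_of_neg_of_pos hA hBy]
end

section
/- For every real κ>0, the cubic −6(1+κ)z³ + 4(κ+1/2)z² + (9+10κ)z − 8(κ+1/2) has a unique root l̂2(κ) in the open interval (0,1), and √κ·(1−l̂2(κ)) → 1/√14 as κ → ∞. -/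
/-!
In the variable `t = 1 - z` the cubic becomes `h(t) = 1 + 5t - 16t² + 6t³ - 2κt²(7 - 3t)`.

Existence of a root is the intermediate value theorem, as `h(0) = 1 > 0` and `h(1) = -4 - 8κ < 0`.
For uniqueness, the leading coefficient of `h` is positive and `h(0) > 0`, so by Vieta two distinct
roots in `(0,1)` would force the third root to be negative, whence `h(1) > 0`, a contradiction.

For the asymptotics, a root satisfies `κt² = (1 + 5t - 16t² + 6t³) / (14 - 6t)`. On `(0,1)` the right
side is at most `1`, so `t ≤ 1/√κ → 0`; then the right side tends to `1/14`, and taking square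
roots gives the claim.
-/

open Real Filter

/-- Two distinct roots `a, b ∈ (0,1)` would leave a third root `c` with `L * a * b * c = -1`,
so `c < 0`, and the value `L * (1 - a) * (1 - b) * (1 - c)` at `1` would be positive,
contrary to `h1`. -/
lemma cubic_root_unique {B L a b : ℝ} (hL : 0 < L) (h1 : 6 - B + L < 0)
    (ha : a ∈ Set.Ioo (0 : ℝ) 1) (hb : b ∈ Set.Ioo (0 : ℝ) 1)
    (ea : 1 + 5 * a - B * a ^ 2 + L * a ^ 3 = 0)
    (eb : 1 + 5 * b - B * b ^ 2 + L * b ^ 3 = 0) : a = b := by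
  obtain ⟨ha0, ha1⟩ := ha
  obtain ⟨hb0, hb1⟩ := hb
  by_contra hab
  have hD : 5 - B * (a + b) + L * (a ^ 2 + a * b + b ^ 2) = 0 := by
    apply mul_left_cancel₀ (sub_ne_zero.mpr hab)
    linear_combination ea - eb
  -- `B - L * (a + b)` is `L` times the third root
  have hc : a * b * (B - L * (a + b)) = -1 := by
    linear_combination ea - a * hD
  have hneg : B - L * (a + b) < 0 := by
    by_contra hn
    have := mul_nonneg (mul_pos ha0 hb0).le (not_lt.mp hn)
    linarith
  have hpos : 0 < (1 - a) * (1 - b) * (L - (B - L * (a + b))) :=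
    mul_pos (mul_pos (by linarith) (by linarith)) (by linarith)
  have hfac : (1 - a) * (1 - b) * (L - (B - L * (a + b))) = 6 - B + L := by
    linear_combination -ea - (1 - a) * hD
  linarith

lemma exists_root {κ : ℝ} (hκ : 0 < κ) : ∃ z ∈ Set.Ioo (0 : ℝ) 1,
    -6 * (1 + κ) * z ^ 3 + 4 * (κ + 1 / 2) * z ^ 2 + (9 + 10 * κ) * z - 8 * (κ + 1 / 2) = 0 := by
  have hcont : ContinuousOn (fun z : ℝ => -6 * (1 + κ) * z ^ 3 + 4 * (κ + 1 / 2) * z ^ 2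
      + (9 + 10 * κ) * z - 8 * (κ + 1 / 2)) (Set.Icc 0 1) := by fun_prop
  obtain ⟨z, hz, e⟩ := intermediate_value_Ioo zero_le_one hcont
    (show (0 : ℝ) ∈ Set.Ioo _ _ from ⟨by norm_num; linarith, by norm_num; linarith⟩)
  exact ⟨z, hz, e⟩

/-- The root equation in the variable `t = 1 - z`, solved for `κ * t ^ 2`. -/
lemma mul_sq_eq {κ z : ℝ} (hz : z ∈ Set.Ioo (0 : ℝ) 1)
    (e : -6 * (1 + κ) * z ^ 3 + 4 * (κ + 1 / 2) * z ^ 2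
      + (9 + 10 * κ) * z - 8 * (κ + 1 / 2) = 0) :
    κ * (1 - z) ^ 2 =
      (1 + 5 * (1 - z) - 16 * (1 - z) ^ 2 + 6 * (1 - z) ^ 3) / (14 - 6 * (1 - z)) := by
  have : 14 - 6 * (1 - z) ≠ 0 := by linarith [hz.1]
  rw [eq_div_iff this]
  linear_combination -e

lemma mul_sq_le_one {κ z : ℝ} (hz : z ∈ Set.Ioo (0 : ℝ) 1)
    (e : -6 * (1 + κ) * z ^ 3 + 4 * (κ + 1 / 2) * z ^ 2
      + (9 + 10 * κ) * z - 8 * (κ + 1 / 2) = 0) :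
    κ * (1 - z) ^ 2 ≤ 1 := by
  obtain ⟨h0, h1⟩ := hz
  rw [mul_sq_eq ⟨h0, h1⟩ e, div_le_one (by linarith)]
  have : 0 ≤ (1 - z) ^ 2 * (16 - 6 * (1 - z)) := mul_nonneg (sq_nonneg _) (by linarith)
  nlinarith

theorem stmt12 :
    ∃ l2 : ℝ → ℝ,
      (∀ κ : ℝ, 0 < κ →
        l2 κ ∈ Set.Ioo (0 : ℝ) 1 ∧
        -6 * (1 + κ) * (l2 κ) ^ 3 + 4 * (κ + 1 / 2) * (l2 κ) ^ 2
            + (9 + 10 * κ) * (l2 κ) - 8 * (κ + 1 / 2) = 0 ∧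
        ∀ z ∈ Set.Ioo (0 : ℝ) 1,
          -6 * (1 + κ) * z ^ 3 + 4 * (κ + 1 / 2) * z ^ 2
              + (9 + 10 * κ) * z - 8 * (κ + 1 / 2) = 0 → z = l2 κ) ∧
      Tendsto (fun κ : ℝ => Real.sqrt κ * (1 - l2 κ)) atTop
        (nhds (1 / Real.sqrt 14)) := by
  have H : ∀ κ : ℝ, ∃ z : ℝ, 0 < κ → z ∈ Set.Ioo (0 : ℝ) 1 ∧
      -6 * (1 + κ) * z ^ 3 + 4 * (κ + 1 / 2) * z ^ 2
        + (9 + 10 * κ) * z - 8 * (κ + 1 / 2) = 0 := by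
    intro κ
    by_cases hκ : 0 < κ
    · obtain ⟨z, hz, e⟩ := exists_root hκ
      exact ⟨z, fun _ => ⟨hz, e⟩⟩
    · exact ⟨0, fun h => absurd h hκ⟩
  choose l2 hl using H
  refine ⟨l2, fun κ hκ => ⟨(hl κ hκ).1, (hl κ hκ).2, fun z hz e => ?_⟩, ?_⟩
  · obtain ⟨hm, e'⟩ := hl κ hκ
    have := cubic_root_unique (B := 16 + 14 * κ) (L := 6 + 6 * κ) (a := 1 - z) (b := 1 - l2 κ)
      (by linarith) (by linarith) ⟨by linarith [hz.2], by linarith [hz.1]⟩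
      ⟨by linarith [hm.2], by linarith [hm.1]⟩
      (by linear_combination e) (by linear_combination e')
    linarith
  · have ht : Tendsto (fun κ => 1 - l2 κ) atTop (nhds 0) := by
      have hinv : Tendsto (fun κ : ℝ => (√κ)⁻¹) atTop (nhds 0) :=
        tendsto_inv_atTop_zero.comp tendsto_sqrt_atTop
      refine tendsto_of_tendsto_of_tendsto_of_le_of_le' tendsto_const_nhds hinv ?_ ?_
      · filter_upwards [eventually_gt_atTop 0] with κ hκ
        linarith [(hl κ hκ).1.2]
      · filter_upwards [eventually_gt_atTop 0] with κ hκ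
        have hle := mul_sq_le_one (hl κ hκ).1 (hl κ hκ).2
        rw [← Real.sqrt_inv]
        apply Real.le_sqrt_of_sq_le
        rw [← one_div, le_div_iff₀ hκ]
        linarith
    have hcont : ContinuousAt
        (fun t : ℝ => √((1 + 5 * t - 16 * t ^ 2 + 6 * t ^ 3) / (14 - 6 * t))) 0 := by
      refine ContinuousAt.sqrt (ContinuousAt.div (by fun_prop) (by fun_prop) (by norm_num))
    have hlim := hcont.tendsto.comp ht
    have hval : √((1 + 5 * (0 : ℝ) - 16 * 0 ^ 2 + 6 * 0 ^ 3) / (14 - 6 * 0)) = 1 / √14 := by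
      norm_num
    rw [hval] at hlim
    refine hlim.congr' ?_
    filter_upwards [eventually_gt_atTop 0] with κ hκ
    obtain ⟨hm, e⟩ := hl κ hκ
    rw [Function.comp_apply, ← mul_sq_eq hm e, Real.sqrt_mul hκ.le,
      Real.sqrt_sq (by linarith [hm.2])]
end

section
/- Let m>0, Q>0 and let 0<ε, τ>0 with ε+τ≤1. Suppose r is three times differentiable on [ε,ε+τ], r'(ε) ≥ mε, and |r'''(R)| ≤ Q for all R∈[ε,ε+τ]. If ε ≥ (Q/(2m))·τ², then 4r(ε+τ/2) − 3r(ε) − r(ε+τ) > 0. -/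
/-!
Put `F h = 4 r(ε + h/2) - 3 r(ε) - r(ε + h)` for `h ∈ [0, τ]`. Then `F 0 = 0`, `F' 0 = r'(ε)` and
`F'' h = r''(ε + h/2) - r''(ε + h) ≥ -Q h / 2`, because the bound on `r'''` makes `r''` Lipschitz
with constant `Q`. Integrating twice gives `F τ ≥ m ε τ - Q τ³ / 12`, and the hypothesis
`m ε ≥ Q τ² / 2` makes the right-hand side at least `5 Q τ³ / 12 > 0`. The integrations are carried
out by monotonicity (`le_of_hasDerivWithinAt_nonneg`), so no integrability of `r'''` is involved.
-/

lemma add_mul_mem_Icc {ε τ c h : ℝ} (hc0 : 0 ≤ c) (hc1 : c ≤ 1) (hh : h ∈ Set.Icc 0 τ) :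
    ε + c * h ∈ Set.Icc ε (ε + τ) := by
  obtain ⟨h0, h1⟩ := hh
  constructor <;> nlinarith [mul_nonneg hc0 h0, mul_nonneg (sub_nonneg.2 hc1) h0]

/-- Chain rule for `h ↦ ε + c h`, which maps `[0, τ]` into `[ε, ε + τ]`. -/
lemma hasDerivWithinAt_rescale {ε τ c : ℝ} (hc0 : 0 ≤ c) (hc1 : c ≤ 1) {f f' : ℝ → ℝ}
    (hf : ∀ R ∈ Set.Icc ε (ε + τ), HasDerivWithinAt f (f' R) (Set.Icc ε (ε + τ)) R)
    {h : ℝ} (hh : h ∈ Set.Icc 0 τ) :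
    HasDerivWithinAt (fun x => f (ε + c * x)) (f' (ε + c * h) * c) (Set.Icc 0 τ) h := by
  have hg : HasDerivWithinAt (fun x : ℝ => ε + c * x) c (Set.Icc 0 τ) h := by
    simpa using (((hasDerivAt_id h).const_mul c).const_add ε).hasDerivWithinAt
  exact (hf _ (add_mul_mem_Icc hc0 hc1 hh)).comp h hg
    fun x hx => add_mul_mem_Icc hc0 hc1 hx

lemma le_of_hasDerivWithinAt_nonneg {τ : ℝ} {G G' : ℝ → ℝ}
    (hG : ∀ h ∈ Set.Icc 0 τ, HasDerivWithinAt G (G' h) (Set.Icc 0 τ) h)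
    (hnn : ∀ h ∈ Set.Icc 0 τ, 0 ≤ G' h) {h : ℝ} (hh : h ∈ Set.Icc 0 τ) : G 0 ≤ G h := by
  have hmono : MonotoneOn G (Set.Icc 0 τ) :=
    monotoneOn_of_hasDerivWithinAt_nonneg (convex_Icc 0 τ)
      (fun x hx => (hG x hx).continuousWithinAt)
      (fun x hx => (hG x (interior_subset hx)).mono interior_subset)
      (fun x hx => hnn x (interior_subset hx))
  exact hmono ⟨le_rfl, hh.1.trans hh.2⟩ hh hh.1

open Real Set

theorem stmt13 (m Q ε τ : ℝ) (hm : 0 < m) (hQ : 0 < Q)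
    (hε : 0 < ε) (hτ : 0 < τ) (hετ : ε + τ ≤ 1)
    (r r' r'' r''' : ℝ → ℝ)
    (hd1 : ∀ R ∈ Set.Icc ε (ε + τ), HasDerivWithinAt r (r' R) (Set.Icc ε (ε + τ)) R)
    (hd2 : ∀ R ∈ Set.Icc ε (ε + τ), HasDerivWithinAt r' (r'' R) (Set.Icc ε (ε + τ)) R)
    (hd3 : ∀ R ∈ Set.Icc ε (ε + τ), HasDerivWithinAt r'' (r''' R) (Set.Icc ε (ε + τ)) R)
    (hr'ε : m * ε ≤ r' ε)
    (hr''' : ∀ R ∈ Set.Icc ε (ε + τ), |r''' R| ≤ Q)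
    (hC : Q / (2 * m) * τ ^ 2 ≤ ε) :
    0 < 4 * r (ε + τ / 2) - 3 * r ε - r (ε + τ) := by
  have hmε : Q * τ ^ 2 / 2 ≤ m * ε := by
    calc Q * τ ^ 2 / 2 = m * (Q / (2 * m) * τ ^ 2) := by field_simp
      _ ≤ m * ε := by gcongr
  have hF'' : ∀ h ∈ Set.Icc 0 τ,
      0 ≤ r'' (ε + 1 / 2 * h) - r'' (ε + 1 * h) + Q * h / 2 := by
    intro h hh
    have key := (convex_Icc ε (ε + τ)).norm_image_sub_le_of_norm_hasDerivWithin_le hd3 hr'''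
      (add_mul_mem_Icc (c := 1 / 2) (by norm_num) (by norm_num) hh)
      (add_mul_mem_Icc (c := 1) (by norm_num) (by norm_num) hh)
    rw [Real.norm_eq_abs, Real.norm_eq_abs,
      show ε + 1 * h - (ε + 1 / 2 * h) = h / 2 by ring,
      abs_of_nonneg (by linarith [hh.1] : 0 ≤ h / 2)] at key
    linarith [le_abs_self (r'' (ε + 1 * h) - r'' (ε + 1 / 2 * h))]
  have hF' : ∀ h ∈ Set.Icc 0 τ,
      0 ≤ 2 * r' (ε + 1 / 2 * h) - r' (ε + 1 * h) - m * ε + Q * h ^ 2 / 4 := by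
    intro h hh
    have key := le_of_hasDerivWithinAt_nonneg
      (G := fun h => 2 * r' (ε + 1 / 2 * h) - r' (ε + 1 * h) - m * ε + Q / 4 * h ^ 2)
      (fun x hx => by
        have d := ((((hasDerivWithinAt_rescale (c := 1 / 2) (by norm_num) (by norm_num)
          hd2 hx).const_mul 2).sub (hasDerivWithinAt_rescale (c := 1) (by norm_num) (by norm_num)
          hd2 hx)).sub_const (m * ε)).add ((hasDerivAt_pow 2 x).hasDerivWithinAt.const_mul (Q / 4))
        refine d.congr_deriv (g' := r'' (ε + 1 / 2 * x) - r'' (ε + 1 * x) + Q * x / 2) ?_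
        norm_num
        ring)
      hF'' hh
    norm_num at key ⊢
    linarith
  have key := le_of_hasDerivWithinAt_nonneg
    (G := fun h => 4 * r (ε + 1 / 2 * h) - r (ε + 1 * h) - m * ε * h + Q / 12 * h ^ 3)
    (fun x hx => by
      have d := ((((hasDerivWithinAt_rescale (c := 1 / 2) (by norm_num) (by norm_num)
        hd1 hx).const_mul 4).sub (hasDerivWithinAt_rescale (c := 1) (by norm_num) (by norm_num)
        hd1 hx)).sub ((hasDerivWithinAt_id x _).const_mul (m * ε))).add
        ((hasDerivAt_pow 3 x).hasDerivWithinAt.const_mul (Q / 12))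
      refine d.congr_deriv
        (g' := 2 * r' (ε + 1 / 2 * x) - r' (ε + 1 * x) - m * ε + Q * x ^ 2 / 4) ?_
      norm_num
      ring)
    hF' (Set.right_mem_Icc.2 hτ.le)
  rw [show ε + τ / 2 = ε + 1 / 2 * τ by ring]
  simp only [mul_zero, add_zero, one_mul] at key
  have h1 : Q * τ ^ 2 / 2 * τ ≤ m * ε * τ := by gcongr
  have h2 : 0 < Q * τ ^ 3 := by positivity
  norm_num at key ⊢
  linarith
end

section
/- Let r_c>0, C0>0 and let 0<ε, τ>0 with ε+τ≤1. Suppose r is twice differentiable on [ε,ε+τ] with r(ε) ≥ r_c and 0 < r''(R) ≤ C0 for all R∈[ε,ε+τ]. If τ ≤ √(2r_c/C0), then 2r(ε+τ/2) > r(ε+τ). -/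
open Real Set

/-! The function `R ↦ C0 * R² / 2 - r R` has second derivative `C0 - r'' ≥ 0`, so it is convex on
`[ε, ε + τ]`. Midpoint convexity bounds the second difference
`r (ε + τ) - 2 * r (ε + τ / 2) + r ε` by `C0 * τ² / 4`, which is at most `rc / 2 < r ε`. -/

theorem stmt14 (rc C0 ε τ : ℝ) (hrc : 0 < rc) (hC0 : 0 < C0)
    (hε : 0 < ε) (hτ : 0 < τ) (hετ : ε + τ ≤ 1)
    (r r' r'' : ℝ → ℝ)
    (hd1 : ∀ R ∈ Set.Icc ε (ε + τ), HasDerivWithinAt r (r' R) (Set.Icc ε (ε + τ)) R)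
    (hd2 : ∀ R ∈ Set.Icc ε (ε + τ), HasDerivWithinAt r' (r'' R) (Set.Icc ε (ε + τ)) R)
    (hrε : rc ≤ r ε)
    (hr'' : ∀ R ∈ Set.Icc ε (ε + τ), 0 < r'' R ∧ r'' R ≤ C0)
    (hτ2 : τ ≤ Real.sqrt (2 * rc / C0)) :
    r (ε + τ) < 2 * r (ε + τ / 2) := by
  have hconv : ConvexOn ℝ (Set.Icc ε (ε + τ)) (fun R => C0 * R ^ 2 / 2 - r R) := by
    refine convexOn_of_hasDerivWithinAt2_nonneg (f' := fun R => C0 * R - r' R)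
      (f'' := fun R => C0 - r'' R) (convex_Icc _ _) ?_ ?_ ?_ ?_
    · have hr : ContinuousOn r (Set.Icc ε (ε + τ)) := fun x hx => (hd1 x hx).continuousWithinAt
      fun_prop
    · intro x hx
      have hq : HasDerivAt (fun R : ℝ => C0 * R ^ 2 / 2) (C0 * x) x := by
        have h := ((hasDerivAt_pow 2 x).const_mul C0).div_const 2
        refine h.congr_deriv ?_
        push_cast
        ring
      exact hq.hasDerivWithinAt.sub ((hd1 x (interior_subset hx)).mono interior_subset)
    · intro x hx
      have hl : HasDerivAt (fun R : ℝ => C0 * R) C0 x := by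
        simpa using (hasDerivAt_id x).const_mul C0
      exact hl.hasDerivWithinAt.sub ((hd2 x (interior_subset hx)).mono interior_subset)
    · intro x hx
      exact sub_nonneg.2 (hr'' x (interior_subset hx)).2
  have hmid := hconv.2 (Set.left_mem_Icc.2 (by linarith)) (Set.right_mem_Icc.2 (by linarith))
    (by norm_num : (0 : ℝ) ≤ 1 / 2) (by norm_num : (0 : ℝ) ≤ 1 / 2) (by norm_num)
  simp only [smul_eq_mul] at hmid
  rw [show 1 / 2 * ε + 1 / 2 * (ε + τ) = ε + τ / 2 by ring] at hmid
  have hτC : τ ^ 2 * C0 ≤ 2 * rc :=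
    (le_div_iff₀ hC0).1 ((Real.le_sqrt hτ.le (by positivity)).1 hτ2)
  linarith
end

section
/- Let constants r_c>0, Λ≥r_c, 0<m<M, Q>0 be given, and let 0<ε, τ>0 with ε+τ≤1. Suppose r is three times continuously differentiable on [ε,ε+τ] with r_c ≤ r(R) ≤ Λ, mR ≤ r'(R) ≤ MR and |r'''(R)| ≤ Q for all R∈[ε,ε+τ], and suppose ε ≥ (Q/(2m))·τ². Write r0=r(ε), r½=r(ε+τ/2), r1=r(ε+τ). Then there exist constants τ̃>0, c>0, C>0, depending only on r_c, Λ, m, M, Q, such that if additionally τ ≤ τ̃, the quadratic 2r0z² − 4r½z + r0 + r1 = 0 has two real roots, and its smaller root l1 satisfies c·(ετ)^{1/2} ≤ 1 − l1 ≤ C·(ετ)^{1/2}. -/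
/-! Write `a = r ε`, `s = r (ε + τ/2) - r ε` and `P = 4 r (ε + τ/2) - 3 r ε - r (ε + τ)`. A quarter of
the discriminant of the quadratic is `4 w²` with `w² = s² + a P / 2`, hence
`1 - l₁ = (w - s) / a = (P / 2) / (w + s)`.

`P` is the one-sided second-order difference approximation of `τ r'(ε)`, with error at most
`Q τ³ / 12` (`one_sided_difference_error`). Since `r'(ε) ≥ m ε` and `Q τ² ≤ 2 m ε`, this error is at
most `m ε τ / 2`, so `P` is comparable to `ε τ`. The upper bound on `1 - l₁` follows from
`w ≤ s + √(a P / 2)`. For the lower bound one needs in addition `s = O(√(ε τ))`: the mean value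
theorem gives `s ≤ M (ε + τ) τ / 2`, and `τ⁴ ≤ τ³ ≤ (2 m / Q) ε τ`. No smallness of `τ` beyond
`τ ≤ 1` is used. The passage from the bounds on `s` and `P` to the roots is `root_bounds`.
-/

open Real Set

/-- A function vanishing at `0` whose derivative is dominated by that of `B`, where `B 0 = 0`,
is itself dominated by `B`. -/
lemma abs_le_of_abs_deriv_le {T : ℝ} {f f' B B' : ℝ → ℝ}
    (hf : ∀ t ∈ Icc 0 T, HasDerivWithinAt f (f' t) (Icc 0 T) t)
    (hB : ∀ t, HasDerivAt B (B' t) t) (hf0 : f 0 = 0) (hB0 : B 0 = 0)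
    (hb : ∀ t ∈ Icc 0 T, |f' t| ≤ B' t) : ∀ t ∈ Icc 0 T, |f t| ≤ B t := by
  intro t ht
  refine image_norm_le_of_norm_deriv_right_le_deriv_boundary (f := f) (f' := f') (B := B)
    (B' := B') (fun x hx => (hf x hx).continuousWithinAt) ?_ ?_ hB ?_ ht
  · intro x hx
    exact (hf x (Ico_subset_Icc_self hx)).mono_of_mem_nhdsWithin (Icc_mem_nhdsGE_of_mem hx)
  · simp [hf0, hB0]
  · intro x hx
    exact hb x (Ico_subset_Icc_self hx)

lemma hasDerivWithinAt_comp_affine {ε τ k : ℝ} {f f' : ℝ → ℝ} (hk0 : 0 ≤ k) (hk1 : k ≤ 1)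
    (hf : ∀ R ∈ Icc ε (ε + τ), HasDerivWithinAt f (f' R) (Icc ε (ε + τ)) R)
    {t : ℝ} (ht : t ∈ Icc 0 τ) :
    HasDerivWithinAt (fun t => f (ε + k * t)) (f' (ε + k * t) * k) (Icc 0 τ) t := by
  have hmaps : MapsTo (fun t => ε + k * t) (Icc 0 τ) (Icc ε (ε + τ)) := by
    intro x hx
    constructor <;> nlinarith [hx.1, hx.2, mul_nonneg hk0 hx.1,
      mul_nonneg (sub_nonneg.2 hk1) hx.1]
  have haff : HasDerivWithinAt (fun t : ℝ => ε + k * t) k (Icc 0 τ) t := by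
    simpa using (((hasDerivAt_id t).const_mul k).const_add ε).hasDerivWithinAt
  exact (hf _ (hmaps ht)).comp t haff hmaps

/-- Error of the one-sided second-order difference quotient for `r'(ε)`. With
`G t = 4 r(ε + t/2) - r(ε + t) - 3 r ε - t r'(ε)` one has `G 0 = G' 0 = 0` and
`G'' t = r''(ε + t/2) - r''(ε + t)`, so `|G'' t| ≤ Q t / 2`; integrate twice. -/
lemma one_sided_difference_error {ε τ Q : ℝ} {r r' r'' r''' : ℝ → ℝ} (hτ : 0 < τ)
    (h1 : ∀ R ∈ Icc ε (ε + τ), HasDerivWithinAt r (r' R) (Icc ε (ε + τ)) R)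
    (h2 : ∀ R ∈ Icc ε (ε + τ), HasDerivWithinAt r' (r'' R) (Icc ε (ε + τ)) R)
    (h3 : ∀ R ∈ Icc ε (ε + τ), HasDerivWithinAt r'' (r''' R) (Icc ε (ε + τ)) R)
    (hQ : ∀ R ∈ Icc ε (ε + τ), |r''' R| ≤ Q) :
    |4 * r (ε + τ / 2) - 3 * r ε - r (ε + τ) - τ * r' ε| ≤ Q * τ ^ 3 / 12 := by
  have hG2 : ∀ t ∈ Icc 0 τ, |r'' (ε + 1 / 2 * t) - r'' (ε + 1 * t)| ≤ Q * t / 2 := by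
    intro t ht
    have := (convex_Icc ε (ε + τ)).norm_image_sub_le_of_norm_hasDerivWithin_le h3 hQ
      (x := ε + 1 * t) (y := ε + 1 / 2 * t)
      ⟨by linarith [ht.1], by linarith [ht.2]⟩ ⟨by linarith [ht.1], by linarith [ht.1, ht.2]⟩
    rw [Real.norm_eq_abs, Real.norm_eq_abs,
      show ε + 1 / 2 * t - (ε + 1 * t) = -(t / 2) by ring, abs_neg,
      abs_of_nonneg (by linarith [ht.1] : 0 ≤ t / 2)] at this
    linarith
  have hG1 : ∀ t ∈ Icc 0 τ,
      |2 * r' (ε + 1 / 2 * t) - r' (ε + 1 * t) - r' ε| ≤ Q * t ^ 2 / 4 := by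
    refine abs_le_of_abs_deriv_le
      (f := fun t => 2 * r' (ε + 1 / 2 * t) - r' (ε + 1 * t) - r' ε)
      (f' := fun t => r'' (ε + 1 / 2 * t) - r'' (ε + 1 * t))
      (B := fun t => Q * t ^ 2 / 4) (B' := fun t => Q * t / 2) ?_ ?_ ?_ ?_ hG2
    · intro t ht
      have ha := hasDerivWithinAt_comp_affine (k := 1 / 2) (by norm_num) (by norm_num) h2 ht
      have hb := hasDerivWithinAt_comp_affine (k := 1) (by norm_num) le_rfl h2 ht
      refine (((ha.const_mul 2).sub hb).sub_const (r' ε)).congr_deriv ?_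
      ring
    · intro t
      refine (((hasDerivAt_pow 2 t).const_mul Q).div_const 4).congr_deriv ?_
      norm_num
      ring
    · simp; ring
    · simp
  have hG0 : ∀ t ∈ Icc 0 τ,
      |4 * r (ε + 1 / 2 * t) - r (ε + 1 * t) - t * r' ε - 3 * r ε| ≤ Q * t ^ 3 / 12 := by
    refine abs_le_of_abs_deriv_le
      (f := fun t => 4 * r (ε + 1 / 2 * t) - r (ε + 1 * t) - t * r' ε - 3 * r ε)
      (f' := fun t => 2 * r' (ε + 1 / 2 * t) - r' (ε + 1 * t) - r' ε)
      (B := fun t => Q * t ^ 3 / 12) (B' := fun t => Q * t ^ 2 / 4) ?_ ?_ ?_ ?_ hG1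
    · intro t ht
      have ha := hasDerivWithinAt_comp_affine (k := 1 / 2) (by norm_num) (by norm_num) h1 ht
      have hb := hasDerivWithinAt_comp_affine (k := 1) (by norm_num) le_rfl h1 ht
      have hc := ((hasDerivAt_id t).mul_const (r' ε)).hasDerivWithinAt (s := Icc 0 τ)
      refine ((((ha.const_mul 4).sub hb).sub hc).sub_const (3 * r ε)).congr_deriv ?_
      ring
    · intro t
      refine (((hasDerivAt_pow 3 t).const_mul Q).div_const 12).congr_deriv ?_
      norm_num
      ring
    · simp; ring
    · simp
  have := hG0 τ ⟨hτ.le, le_rfl⟩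
  rw [show ε + 1 / 2 * τ = ε + τ / 2 by ring, show ε + 1 * τ = ε + τ by ring] at this
  convert this using 2
  ring

/-- The algebraic part: roots `(a + s ∓ w) / a` with `w = √(s² + a P / 2)`, where
`a = r ε`, `b = r (ε + τ/2)`, `d = r (ε + τ)`, `s = b - a`, `P = 4 b - 3 a - d`, and `g` plays the
role of `√(ε τ)`. -/
lemma root_bounds {rc Λ a b d g p A S : ℝ} (hrc : 0 < rc) (ha : rc ≤ a) (haΛ : a ≤ Λ)
    (hg : 0 < g) (hp : 0 < p) (hA : 0 ≤ A) (hs0 : 0 ≤ b - a) (hs : b - a ≤ S * g)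
    (hP : p * g ^ 2 ≤ 4 * b - 3 * a - d) (hP' : Λ * (4 * b - 3 * a - d) / 2 ≤ A * g ^ 2) :
    ∃ l1 z2 : ℝ, l1 < z2 ∧
      (∀ z : ℝ, 2 * a * z ^ 2 - 4 * b * z + a + d = 0 ↔ z = l1 ∨ z = z2) ∧
      p / (2 * (2 * S + A + 1)) * g ≤ 1 - l1 ∧ 1 - l1 ≤ (A + 1) / rc * g := by
  have ha0 : 0 < a := hrc.trans_le ha
  set s := b - a with hs_def
  set P := 4 * b - 3 * a - d with hP_def
  have hPpos : 0 < P := lt_of_lt_of_le (by positivity) hP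
  have hS : 0 ≤ S := nonneg_of_mul_nonneg_left (hs0.trans hs) hg
  set w := √(s ^ 2 + a * P / 2) with hw_def
  have hw2 : w ^ 2 = s ^ 2 + a * P / 2 := Real.sq_sqrt (by positivity)
  have hw : 0 < w := Real.sqrt_pos.2 (by positivity)
  have haP : a * P / 2 ≤ A * g ^ 2 := by
    have := mul_le_mul_of_nonneg_right haΛ hPpos.le
    linarith
  have hwle : w ≤ s + (A + 1) * g := by
    refine abs_le_of_sq_le_sq' ?_ (by positivity) |>.2
    rw [hw2]
    have h1 : 0 ≤ s * ((A + 1) * g) := by positivity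
    have h2 : 0 ≤ (A ^ 2 + A + 1) * g ^ 2 := by positivity
    nlinarith
  refine ⟨(b - w) / a, (b + w) / a, ?_, ?_, ?_, ?_⟩
  · gcongr
    linarith
  · intro z
    have hfac : a * (2 * a * z ^ 2 - 4 * b * z + a + d)
        = 2 * ((a * z - (b - w)) * (a * z - (b + w))) := by
      linear_combination 2 * hw2 + 2 * (s + b - a) * hs_def + a * hP_def
    rw [eq_div_iff ha0.ne', eq_div_iff ha0.ne', mul_comm z a]
    constructor
    · intro h
      rw [h, mul_zero] at hfac
      have : (a * z - (b - w)) * (a * z - (b + w)) = 0 := by linarith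
      rcases mul_eq_zero.1 this with h | h
      · left; linarith
      · right; linarith
    · intro h
      have : (a * z - (b - w)) * (a * z - (b + w)) = 0 := by
        rcases h with h | h <;> rw [h] <;> ring
      rw [this, mul_zero] at hfac
      exact (mul_eq_zero.1 hfac).resolve_left ha0.ne'
  · have hws : 0 < w + s := by linarith
    have heq : 1 - (b - w) / a = P / 2 / (w + s) := by
      rw [eq_div_iff hws.ne']
      field_simp
      linear_combination 2 * hw2 + (2 * w + 2 * s) * hs_def
    rw [heq, le_div_iff₀ hws]
    have hden : 0 < 2 * S + A + 1 := by positivity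
    calc p / (2 * (2 * S + A + 1)) * g * (w + s)
        ≤ p / (2 * (2 * S + A + 1)) * g * ((2 * S + A + 1) * g) := by
          gcongr
          linarith
      _ = p * g ^ 2 / 2 := by field_simp
      _ ≤ P / 2 := by linarith
  · have heq : 1 - (b - w) / a = (w - s) / a := by
      field_simp
      rw [hs_def]
      ring
    rw [heq]
    calc (w - s) / a ≤ ((A + 1) * g) / a := by
          gcongr
          linarith
      _ ≤ ((A + 1) * g) / rc := by gcongr
      _ = (A + 1) / rc * g := by ring

theorem stmt16 (rc Λ m M Q : ℝ)
    (hrc : 0 < rc) (hΛ : rc ≤ Λ) (hm : 0 < m) (hmM : m < M) (hQ : 0 < Q) :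
    ∃ τt c C : ℝ, 0 < τt ∧ 0 < c ∧ 0 < C ∧
      ∀ ε τ : ℝ, 0 < ε → 0 < τ → ε + τ ≤ 1 →
      ∀ r r' r'' r''' : ℝ → ℝ,
        (∀ R ∈ Set.Icc ε (ε + τ), HasDerivWithinAt r (r' R) (Set.Icc ε (ε + τ)) R) →
        (∀ R ∈ Set.Icc ε (ε + τ), HasDerivWithinAt r' (r'' R) (Set.Icc ε (ε + τ)) R) →
        (∀ R ∈ Set.Icc ε (ε + τ), HasDerivWithinAt r'' (r''' R) (Set.Icc ε (ε + τ)) R) →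
        ContinuousOn r''' (Set.Icc ε (ε + τ)) →
        (∀ R ∈ Set.Icc ε (ε + τ), rc ≤ r R ∧ r R ≤ Λ) →
        (∀ R ∈ Set.Icc ε (ε + τ), m * R ≤ r' R ∧ r' R ≤ M * R) →
        (∀ R ∈ Set.Icc ε (ε + τ), |r''' R| ≤ Q) →
        Q / (2 * m) * τ ^ 2 ≤ ε →
        τ ≤ τt →
        ∃ l1 z2 : ℝ, l1 < z2 ∧
          (∀ z : ℝ,
            2 * r ε * z ^ 2 - 4 * r (ε + τ / 2) * z + r ε + r (ε + τ) = 0 ↔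
              z = l1 ∨ z = z2) ∧
          c * Real.sqrt (ε * τ) ≤ 1 - l1 ∧ 1 - l1 ≤ C * Real.sqrt (ε * τ) := by
  have hM : 0 < M := hm.trans hmM
  have hΛ0 : 0 < Λ := hrc.trans_le hΛ
  -- `S` and `A` are the constants in `s ≤ S √(ε τ)` and `Λ P / 2 ≤ A ε τ`.
  set S := M / 2 * (1 + √(2 * m / Q)) with hS_def
  set A := Λ * (M + m / 2) / 2 with hA_def
  have hS : 0 < S := by positivity
  have hA : 0 < A := by positivity
  refine ⟨1, m / 2 / (2 * (2 * S + A + 1)), (A + 1) / rc, one_pos, by positivity, by positivity,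
    ?_⟩
  intro ε τ hε hτ hετ r r' r'' r''' h1 h2 h3 _ hr hr' hr3 hcond _
  have hεmem : ε ∈ Icc ε (ε + τ) := ⟨le_rfl, by linarith⟩
  have hτ1 : τ ≤ 1 := by linarith
  have hg : 0 < √(ε * τ) := Real.sqrt_pos.2 (by positivity)
  have hg2 : √(ε * τ) ^ 2 = ε * τ := Real.sq_sqrt (by positivity)
  have hg1 : √(ε * τ) ≤ 1 := Real.sqrt_le_one.2 (by nlinarith)
  have hQτ : Q * τ ^ 2 ≤ 2 * m * ε := by
    have := mul_le_mul_of_nonneg_left hcond (by positivity : 0 ≤ 2 * m)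
    rwa [← mul_assoc, mul_div_cancel₀ _ (by positivity : 2 * m ≠ 0)] at this
  have hτ2 : τ ^ 2 ≤ √(2 * m / Q) * √(ε * τ) := by
    rw [← Real.sqrt_mul (by positivity)]
    refine Real.le_sqrt_of_sq_le ?_
    rw [div_mul_eq_mul_div, le_div_iff₀ hQ]
    calc (τ ^ 2) ^ 2 * Q = Q * τ ^ 2 * τ * τ := by ring
      _ ≤ Q * τ ^ 2 * τ * 1 := by gcongr
      _ ≤ 2 * m * ε * τ * 1 := by gcongr
      _ = 2 * m * (ε * τ) := by ring
  obtain ⟨ξ, hξ, hξs⟩ : ∃ ξ ∈ Ioo ε (ε + τ / 2),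
      r' ξ = (r (ε + τ / 2) - r ε) / (ε + τ / 2 - ε) := by
    have hsub : Icc ε (ε + τ / 2) ⊆ Icc ε (ε + τ) := Icc_subset_Icc_right (by linarith)
    refine exists_hasDerivAt_eq_slope r r' (by linarith)
      (fun x hx => (h1 x (hsub hx)).continuousWithinAt.mono hsub) fun x hx => ?_
    exact (h1 x (hsub (Ioo_subset_Icc_self hx))).hasDerivAt
      (Icc_mem_nhds hx.1 (by linarith [hx.2]))
  have hξr := hr' ξ ⟨hξ.1.le, by linarith [hξ.2]⟩
  have hs_eq : r (ε + τ / 2) - r ε = r' ξ * (τ / 2) := by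
    rw [hξs, add_sub_cancel_left, div_mul_cancel₀ _ (by positivity)]
  have hξ0 : 0 < ξ := hε.trans hξ.1
  have herr := abs_le.1 (one_sided_difference_error hτ h1 h2 h3 hr3)
  -- The difference error is at most half of the leading term's lower bound `m ε τ`.
  have herr' : Q * τ ^ 3 / 12 ≤ m / 2 * (ε * τ) := by
    have : Q * τ ^ 2 * τ ≤ 2 * m * ε * τ := by gcongr
    have : 0 < m * (ε * τ) := by positivity
    nlinarith
  have hr'ε := hr' ε hεmem
  have hlo : m * ε * τ ≤ r' ε * τ := mul_le_mul_of_nonneg_right hr'ε.1 hτ.le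
  have hhi : r' ε * τ ≤ M * ε * τ := mul_le_mul_of_nonneg_right hr'ε.2 hτ.le
  refine root_bounds hrc (hr ε hεmem).1 (hr ε hεmem).2 hg (by positivity) hA.le ?_ ?_ ?_ ?_
  · rw [hs_eq]
    have : 0 ≤ r' ξ := le_trans (by positivity) hξr.1
    positivity
  · rw [hs_eq]
    calc r' ξ * (τ / 2) ≤ M * ξ * (τ / 2) := by gcongr; exact hξr.2
      _ ≤ M * (ε + τ) * (τ / 2) := by gcongr; linarith [hξ.2]
      _ = M / 2 * (√(ε * τ) ^ 2 + τ ^ 2) := by rw [hg2]; ring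
      _ ≤ M / 2 * (√(ε * τ) + √(2 * m / Q) * √(ε * τ)) := by
          gcongr
          nlinarith
      _ = S * √(ε * τ) := by rw [hS_def]; ring
  · rw [hg2]
    linarith [herr.1]
  · rw [hg2, hA_def]
    have : 4 * r (ε + τ / 2) - 3 * r ε - r (ε + τ) ≤ (M + m / 2) * (ε * τ) := by
      linarith [herr.2]
    have := mul_le_mul_of_nonneg_left this hΛ0.le
    linarith
end

section
/- Let constants r_c>0, Λ≥r_c, 0<m<M, C0>0 be given, and let 0<ε, τ>0 with ε+τ≤1. Suppose r is twice continuously differentiable on [ε,ε+τ] with r_c ≤ r(R) ≤ Λ, mR ≤ r'(R) ≤ MR and 0 < r''(R) ≤ C0 for all R∈[ε,ε+τ]. Write r0=r(ε), r½=r(ε+τ/2), r1=r(ε+τ). Then the cubic −6r1z³ + 4r½z² + (r0+9r1)z − 8r½ = 0 has a unique root l2 in the open interval (0,1), and there exist constants δ>0, c>0, C>0, depending only on r_c, Λ, m, M, C0, such that if additionally (ε+τ)τ ≤ δ, then c·((ε+τ)τ)^{1/2} ≤ 1 − l2 ≤ C·((ε+τ)τ)^{1/2}. -/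
/-!
Write `p` for the cubic, with `a = r ε`, `b = r (ε + τ/2)`, `d = r (ε + τ)` and `s = (ε + τ) τ`.
The mean value theorem, applied to `r` on the two halves of the interval and to `r'` between the two
intermediate points, gives `m s / 2 ≤ p(1) = 3 (d - b) - (b - a)` and `d - a ≤ M s`
(`profile_bounds`). In particular `p(0) < 0 < p(1)`, so `p` has a root in `(0,1)`; its leading
coefficient being negative, the other two roots lie in `(-∞,0)` and `(1,∞)`, whence uniqueness
(`cubic_root_unique`). Setting `l2 = 1 - y`, the equation `p(1 - y) = 0` reads
`(18 d - 4 b - 6 d y) y² = p(1) + (9 d - 8 b - a) y`. The coefficient of `y²` lies between `8 rc`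
and `18 Λ`, and the right-hand side between `m s / 2` and `12 M s`, so `y²` is comparable to `s`.
These bounds hold for every `s`, so any positive `δ` will do.
-/

open Real Set

/-- Mean value theorem on a subinterval `[x, y]` of `[A, B]`, from one-sided derivatives
relative to `[A, B]`. -/
lemma mvt_sub {A B x y : ℝ} {f f' : ℝ → ℝ}
    (hf : ∀ R ∈ Set.Icc A B, HasDerivWithinAt f (f' R) (Set.Icc A B) R)
    (hA : A ≤ x) (hxy : x < y) (hB : y ≤ B) :
    ∃ ξ ∈ Set.Ioo x y, f y - f x = f' ξ * (y - x) := by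
  obtain ⟨ξ, hξ, h⟩ := exists_hasDerivAt_eq_slope f f' hxy
    (fun R hR => ((hf R ⟨hA.trans hR.1, hR.2.trans hB⟩).continuousWithinAt).mono
      (Set.Icc_subset_Icc hA hB))
    (fun R hR => (hf R ⟨hA.trans hR.1.le, hR.2.le.trans hB⟩).hasDerivAt
      (Icc_mem_nhds (hA.trans_lt hR.1) (hR.2.trans_le hB)))
  refine ⟨ξ, hξ, ?_⟩
  rw [h, div_mul_cancel₀ _ (sub_pos.2 hxy).ne']

/-- The first inequality is the quantitative bound on the value of the cubic at `1`; it combines the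
convexity of `r` with the lower bound on the slope of `r` over the second half of the interval. -/
lemma profile_bounds {m M ε τ : ℝ} (hm : 0 < m) (hmM : m < M) (hε : 0 < ε) (hτ : 0 < τ)
    {r r' r'' : ℝ → ℝ}
    (h1 : ∀ R ∈ Set.Icc ε (ε + τ), HasDerivWithinAt r (r' R) (Set.Icc ε (ε + τ)) R)
    (h2 : ∀ R ∈ Set.Icc ε (ε + τ), HasDerivWithinAt r' (r'' R) (Set.Icc ε (ε + τ)) R)
    (hr' : ∀ R ∈ Set.Icc ε (ε + τ), m * R ≤ r' R ∧ r' R ≤ M * R)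
    (hr'' : ∀ R ∈ Set.Icc ε (ε + τ), 0 < r'' R) :
    m * ((ε + τ) * τ) / 2 ≤ 3 * r (ε + τ) - 4 * r (ε + τ / 2) + r ε ∧
    r ε ≤ r (ε + τ / 2) ∧ r (ε + τ / 2) ≤ r (ε + τ) ∧
    r (ε + τ) - r ε ≤ M * ((ε + τ) * τ) := by
  obtain ⟨ξ, ⟨hξ1, hξ2⟩, e1⟩ := mvt_sub h1 le_rfl
    (by linarith : ε < ε + τ / 2) (by linarith)
  obtain ⟨η, ⟨hη1, hη2⟩, e2⟩ := mvt_sub h1 (by linarith)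
    (by linarith : ε + τ / 2 < ε + τ) le_rfl
  obtain ⟨ζ, ⟨hζ1, hζ2⟩, e3⟩ := mvt_sub h2 hξ1.le (by linarith : ξ < η) hη2.le
  have k : r' ξ ≤ r' η := by
    have := mul_pos (hr'' ζ ⟨by linarith, by linarith⟩) (by linarith : 0 < η - ξ)
    linarith
  obtain ⟨lξ, -⟩ := hr' ξ ⟨by linarith, by linarith⟩
  obtain ⟨lη, uη⟩ := hr' η ⟨by linarith, by linarith⟩
  have pξ : 0 < r' ξ := lt_of_lt_of_le (mul_pos hm (by linarith)) lξ
  have e1' : r (ε + τ / 2) - r ε = r' ξ * (τ / 2) := by rw [e1]; ring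
  have e2' : r (ε + τ) - r (ε + τ / 2) = r' η * (τ / 2) := by rw [e2]; ring
  have kτ : r' ξ * (τ / 2) ≤ r' η * (τ / 2) := by gcongr
  have pτ : 0 < r' ξ * (τ / 2) := by positivity
  have lo : m * ((ε + τ) / 2) * τ ≤ r' η * τ := by
    refine mul_le_mul_of_nonneg_right (le_trans ?_ lη) hτ.le
    exact mul_le_mul_of_nonneg_left (by linarith) hm.le
  have up : r' η * τ ≤ M * (ε + τ) * τ := by
    refine mul_le_mul_of_nonneg_right (uη.trans ?_) hτ.le
    exact mul_le_mul_of_nonneg_left hη2.le (by linarith)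
  refine ⟨?_, ?_, ?_, ?_⟩ <;> linarith

/-- Two distinct roots `z, w` in `(0,1)` would force, by factoring, the third root `t` to satisfy
both `t < 0` (sign at `0`) and `t > 1` (sign at `1`). -/
lemma cubic_root_unique_s17 {a b d z w : ℝ} (hb : 0 < b) (hd : 0 < d)
    (h1 : 0 < 3 * d - 4 * b + a) (hz : z ∈ Set.Ioo (0 : ℝ) 1) (hw : w ∈ Set.Ioo (0 : ℝ) 1)
    (ez : -6 * d * z ^ 3 + 4 * b * z ^ 2 + (a + 9 * d) * z - 8 * b = 0)
    (ew : -6 * d * w ^ 3 + 4 * b * w ^ 2 + (a + 9 * d) * w - 8 * b = 0) : z = w := by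
  by_contra hne
  -- `q = 6 d t`, with `t` the third root read off from the sum of the roots
  obtain ⟨q, hq⟩ : ∃ q, q = 4 * b - 6 * d * (z + w) := ⟨_, rfl⟩
  have hlin : -6 * d * (z ^ 2 + z * w + w ^ 2) + 4 * b * (z + w) + (a + 9 * d) = 0 :=
    mul_left_cancel₀ (sub_ne_zero.2 hne) (by linear_combination ez - ew)
  have hq0 : z * w * q = -(8 * b) := by
    rw [hq]; linear_combination z * hlin - ez
  have hq1 : (1 - z) * (1 - w) * (q - 6 * d) = 3 * d - 4 * b + a := by
    rw [hq]; linear_combination (z - 1) * hlin - ez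
  have A : q < 0 := by
    by_contra h
    have := mul_nonneg (mul_pos hz.1 hw.1).le (not_lt.1 h)
    linarith
  have B := mul_neg_of_pos_of_neg (mul_pos (sub_pos.2 hz.2) (sub_pos.2 hw.2))
    (by linarith : q - 6 * d < 0)
  linarith


theorem stmt17 (rc Λ m M C0 : ℝ)
    (hrc : 0 < rc) (hΛ : rc ≤ Λ) (hm : 0 < m) (hmM : m < M) (hC0 : 0 < C0) :
    ∃ δ c C : ℝ, 0 < δ ∧ 0 < c ∧ 0 < C ∧
      ∀ ε τ : ℝ, 0 < ε → 0 < τ → ε + τ ≤ 1 →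
      ∀ r r' r'' : ℝ → ℝ,
        (∀ R ∈ Set.Icc ε (ε + τ), HasDerivWithinAt r (r' R) (Set.Icc ε (ε + τ)) R) →
        (∀ R ∈ Set.Icc ε (ε + τ), HasDerivWithinAt r' (r'' R) (Set.Icc ε (ε + τ)) R) →
        ContinuousOn r'' (Set.Icc ε (ε + τ)) →
        (∀ R ∈ Set.Icc ε (ε + τ), rc ≤ r R ∧ r R ≤ Λ) →
        (∀ R ∈ Set.Icc ε (ε + τ), m * R ≤ r' R ∧ r' R ≤ M * R) →
        (∀ R ∈ Set.Icc ε (ε + τ), 0 < r'' R ∧ r'' R ≤ C0) →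
        ∃ l2 : ℝ, l2 ∈ Set.Ioo (0 : ℝ) 1 ∧
          -6 * r (ε + τ) * l2 ^ 3 + 4 * r (ε + τ / 2) * l2 ^ 2
              + (r ε + 9 * r (ε + τ)) * l2 - 8 * r (ε + τ / 2) = 0 ∧
          (∀ z ∈ Set.Ioo (0 : ℝ) 1,
            -6 * r (ε + τ) * z ^ 3 + 4 * r (ε + τ / 2) * z ^ 2
                + (r ε + 9 * r (ε + τ)) * z - 8 * r (ε + τ / 2) = 0 → z = l2) ∧
          ((ε + τ) * τ ≤ δ →
            c * Real.sqrt ((ε + τ) * τ) ≤ 1 - l2 ∧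
            1 - l2 ≤ C * Real.sqrt ((ε + τ) * τ)) := by
  have hΛ0 : 0 < Λ := hrc.trans_le hΛ
  have hM : 0 < M := hm.trans hmM
  refine ⟨1, √(m / (36 * Λ)), √(12 * M / (8 * rc)), one_pos, by positivity, by positivity, ?_⟩
  intro ε τ hε hτ hετ r r' r'' h1 h2 _ hr hr' hr''
  obtain ⟨hp, hab, hbd, hda⟩ :=
    profile_bounds hm hmM hε hτ h1 h2 hr' (fun R hR => (hr'' R hR).1)
  have ha : rc ≤ r ε := (hr ε ⟨le_rfl, by linarith⟩).1
  have hdΛ : r (ε + τ) ≤ Λ := (hr (ε + τ) ⟨by linarith, le_rfl⟩).2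
  generalize r ε = a at *
  generalize r (ε + τ / 2) = b at *
  generalize r (ε + τ) = d at *
  have hs : 0 < (ε + τ) * τ := by positivity
  generalize (ε + τ) * τ = s at *
  have hms : 0 < m * s := mul_pos hm hs
  obtain ⟨l, hl, el⟩ : ∃ l ∈ Set.Ioo (0 : ℝ) 1,
      -6 * d * l ^ 3 + 4 * b * l ^ 2 + (a + 9 * d) * l - 8 * b = 0 := by
    have hc : ContinuousOn (fun l : ℝ =>
        -6 * d * l ^ 3 + 4 * b * l ^ 2 + (a + 9 * d) * l - 8 * b) (Set.Icc 0 1) := by fun_prop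
    obtain ⟨l, hl, e⟩ := intermediate_value_Ioo zero_le_one hc
      (show (0 : ℝ) ∈ Set.Ioo _ _ from ⟨by norm_num; linarith, by norm_num; linarith⟩)
    exact ⟨l, hl, e⟩
  refine ⟨l, hl, el, fun z hz ez => cubic_root_unique_s17 (by linarith) (by linarith)
    (by linarith) hz hl ez el, fun _ => ?_⟩
  obtain ⟨y, rfl⟩ : ∃ y, l = 1 - y := ⟨1 - l, by ring⟩
  have hy0 : 0 < y := by linarith [hl.2]
  have hy1 : y < 1 := by linarith [hl.1]
  have key : (18 * d - 4 * b - 6 * d * y) * y ^ 2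
      = (3 * d - 4 * b + a) + (9 * d - 8 * b - a) * y := by linear_combination -el
  have hdy : 0 < d * y := mul_pos (by linarith) hy0
  have hdy1 : d * y ≤ d := mul_le_of_le_one_right (by linarith) hy1.le
  have hL : (18 * d - 4 * b - 6 * d * y) * y ^ 2 ≤ 18 * Λ * y ^ 2 :=
    mul_le_mul_of_nonneg_right (by linarith) (sq_nonneg y)
  have hU : 8 * rc * y ^ 2 ≤ (18 * d - 4 * b - 6 * d * y) * y ^ 2 :=
    mul_le_mul_of_nonneg_right (by linarith) (sq_nonneg y)
  have hlin0 : 0 ≤ (9 * d - 8 * b - a) * y := mul_nonneg (by linarith) hy0.le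
  have hlin1 : (9 * d - 8 * b - a) * y ≤ 9 * d - 8 * b - a :=
    mul_le_of_le_one_right (by linarith) hy1.le
  rw [sub_sub_cancel, ← Real.sqrt_mul (by positivity), ← Real.sqrt_mul (by positivity)]
  constructor
  · rw [Real.sqrt_le_left hy0.le, div_mul_eq_mul_div, div_le_iff₀ (by positivity)]
    linarith
  · apply Real.le_sqrt_of_sq_le
    rw [div_mul_eq_mul_div, le_div_iff₀ (by positivity)]
    linarith
end

section
/- Let constants r_c>0, Λ≥r_c, 0<m<M be given, and let 0<ε, τ>0 with ε+τ≤1. Suppose r is differentiable on [ε,ε+τ] with r_c ≤ r(R) ≤ Λ and mR ≤ r'(R) ≤ MR for all R∈[ε,ε+τ]. Then there exist constants c>0, C>0, depending only on r_c, Λ, m, M, such that for every integer N≥2: (i) if N ≥ C·(ετ)^{−1/2}, then cos(π/N) > r(ε)/r(ε+τ) and cos(π/N) > ε/(ε+τ); and (ii) if cos(π/N) > r(ε)/r(ε+τ) and cos(π/N) > ε/(ε+τ), then N ≥ c·((ε+τ)τ)^{−1/2}. -/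
/-!
The idea is that `1 - cos (π / N)` is comparable to `N⁻²`: it lies between `2 / N²` (a concavity
bound, `two_div_sq_le`, needing only `|π / N| ≤ π`) and `π² / (2 N²)` (Taylor, `lt_pi_sq_div`).
By the mean value theorem `r (ε + τ) - r ε = r' ξ * τ` with `ε < ξ < ε + τ`, so
`1 - r ε / r (ε + τ)` lies between `m ε τ / Λ` and `M (ε + τ) τ / r_c`, while
`1 - ε / (ε + τ) = τ / (ε + τ) ≥ ε τ`. Comparing the two estimates gives both implications with
`C = π √(Λ / m + 1)` and `c = √(r_c / M)`.
-/

open Real Set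

lemma rpow_neg_half {x : ℝ} (hx : 0 ≤ x) : x ^ (-(1 : ℝ) / 2) = (√x)⁻¹ := by
  rw [neg_div, Real.rpow_neg hx, Real.sqrt_eq_rpow]

lemma lt_pi_sq_div {N : ℝ} (hN : 0 < N) :
    1 - Real.cos (Real.pi / N) < Real.pi ^ 2 / (2 * N ^ 2) := by
  have h := Real.one_sub_sq_div_two_lt_cos (x := Real.pi / N) (by positivity)
  have e : (Real.pi / N) ^ 2 / 2 = Real.pi ^ 2 / (2 * N ^ 2) := by field_simp
  linarith

lemma two_div_sq_le {N : ℝ} (hN : 1 ≤ N) :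
    2 / N ^ 2 ≤ 1 - Real.cos (Real.pi / N) := by
  have h0 : 0 < N := by linarith
  have h := Real.cos_le_one_sub_mul_cos_sq (x := Real.pi / N) (by
    rw [abs_of_pos (by positivity)]
    exact div_le_self Real.pi_pos.le hN)
  have e : 2 / Real.pi ^ 2 * (Real.pi / N) ^ 2 = 2 / N ^ 2 := by
    have := Real.pi_pos
    field_simp
  linarith

/-- The increment of `r` over the layer, by the mean value theorem. -/
lemma increment_bounds {m M ε τ : ℝ} (hm : 0 < m) (hM : 0 < M) (hτ : 0 < τ)
    {r r' : ℝ → ℝ}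
    (hd : ∀ R ∈ Set.Icc ε (ε + τ), HasDerivWithinAt r (r' R) (Set.Icc ε (ε + τ)) R)
    (hb : ∀ R ∈ Set.Icc ε (ε + τ), m * R ≤ r' R ∧ r' R ≤ M * R) :
    m * (ε * τ) ≤ r (ε + τ) - r ε ∧ r (ε + τ) - r ε ≤ M * ((ε + τ) * τ) := by
  obtain ⟨ξ, hξ, h⟩ := exists_hasDerivAt_eq_slope r r' (show ε < ε + τ by linarith)
    (fun x hx => (hd x hx).continuousWithinAt)
    (fun x hx => (hd x (Set.Ioo_subset_Icc_self hx)).hasDerivAt (Icc_mem_nhds hx.1 hx.2))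
  have h2 : r (ε + τ) - r ε = r' ξ * τ := by
    rw [h, add_sub_cancel_left]
    field_simp
  obtain ⟨hl, hu⟩ := hb ξ (Set.Ioo_subset_Icc_self hξ)
  have h3 : m * ε ≤ r' ξ := (mul_le_mul_of_nonneg_left hξ.1.le hm.le).trans hl
  have h4 : r' ξ ≤ M * (ε + τ) := hu.trans (mul_le_mul_of_nonneg_left hξ.2.le hM.le)
  rw [h2, ← mul_assoc, ← mul_assoc]
  exact ⟨mul_le_mul_of_nonneg_right h3 hτ.le, mul_le_mul_of_nonneg_right h4 hτ.le⟩

theorem stmt19 (rc Λ m M : ℝ)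
    (hrc : 0 < rc) (hΛ : rc ≤ Λ) (hm : 0 < m) (hmM : m < M) :
    ∃ c C : ℝ, 0 < c ∧ 0 < C ∧
      ∀ ε τ : ℝ, 0 < ε → 0 < τ → ε + τ ≤ 1 →
      ∀ r r' : ℝ → ℝ,
        (∀ R ∈ Set.Icc ε (ε + τ), HasDerivWithinAt r (r' R) (Set.Icc ε (ε + τ)) R) →
        (∀ R ∈ Set.Icc ε (ε + τ), rc ≤ r R ∧ r R ≤ Λ) →
        (∀ R ∈ Set.Icc ε (ε + τ), m * R ≤ r' R ∧ r' R ≤ M * R) →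
        ∀ N : ℕ, 2 ≤ N →
          ((C * (ε * τ) ^ (-(1 : ℝ) / 2) ≤ (N : ℝ) →
            r ε / r (ε + τ) < Real.cos (Real.pi / (N : ℝ)) ∧
            ε / (ε + τ) < Real.cos (Real.pi / (N : ℝ))) ∧
          ((r ε / r (ε + τ) < Real.cos (Real.pi / (N : ℝ)) ∧
            ε / (ε + τ) < Real.cos (Real.pi / (N : ℝ))) →
            c * ((ε + τ) * τ) ^ (-(1 : ℝ) / 2) ≤ (N : ℝ))) := by
  have hM : 0 < M := hm.trans hmM
  have hΛ0 : 0 < Λ := hrc.trans_le hΛ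
  refine ⟨√(rc / M), Real.pi * √(Λ / m + 1), by positivity, by positivity, ?_⟩
  intro ε τ hε hτ hετ r r' hd hr hb N hN
  obtain ⟨hl, hu⟩ := increment_bounds hm hM hτ hd hb
  obtain ⟨hr1, hr2⟩ := hr (ε + τ) ⟨by linarith, le_rfl⟩
  have hrp : 0 < r (ε + τ) := hrc.trans_le hr1
  have hN2 : (2 : ℝ) ≤ N := by exact_mod_cast hN
  have hN0 : (0 : ℝ) < N := by linarith
  have eq1 : r ε / r (ε + τ) = 1 - (r (ε + τ) - r ε) / r (ε + τ) := by field_simp; ring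
  have eq2 : ε / (ε + τ) = 1 - τ / (ε + τ) := by field_simp; ring
  rw [rpow_neg_half (by positivity), rpow_neg_half (by positivity), eq1, eq2]
  refine ⟨fun h => ?_, fun h => ?_⟩
  · have hsq : Real.pi ^ 2 * (Λ / m + 1) ≤ (N : ℝ) ^ 2 * (ε * τ) := by
      rw [← div_eq_mul_inv, div_le_iff₀ (by positivity)] at h
      have h2 := pow_le_pow_left₀ (by positivity) h 2
      rwa [mul_pow, mul_pow, Real.sq_sqrt (by positivity), Real.sq_sqrt (by positivity)] at h2
    have hc := lt_pi_sq_div hN0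
    have hp := Real.pi_pos
    have key : Real.pi ^ 2 / (2 * (N : ℝ) ^ 2) * (Λ / m + 1) ≤ ε * τ := by
      rw [div_mul_eq_mul_div, div_le_iff₀ (by positivity)]
      have : 0 < (N : ℝ) ^ 2 * (ε * τ) := by positivity
      linarith
    set q := Real.pi ^ 2 / (2 * (N : ℝ) ^ 2) with hq
    have hq0 : 0 < q := by positivity
    have k1 : q * Λ ≤ m * (ε * τ) := by
      have h5 : q * (Λ / m) ≤ ε * τ := by linarith
      rw [← mul_div_assoc, div_le_iff₀ hm] at h5
      linarith
    have k2 : q ≤ ε * τ := by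
      have : 0 < q * (Λ / m) := by positivity
      linarith
    have b1 : q ≤ (r (ε + τ) - r ε) / r (ε + τ) := by
      rw [le_div_iff₀ hrp]
      exact ((mul_le_mul_of_nonneg_left hr2 hq0.le).trans k1).trans hl
    have b2 : q ≤ τ / (ε + τ) := by
      rw [le_div_iff₀ (by positivity)]
      have hqτ : q ≤ τ := k2.trans (mul_le_of_le_one_left hτ.le (by linarith))
      exact (mul_le_of_le_one_right hq0.le hετ).trans hqτ
    constructor <;> linarith
  · have hc := two_div_sq_le (N := (N : ℝ)) (by linarith)
    have h1 : 2 / (N : ℝ) ^ 2 < (r (ε + τ) - r ε) / r (ε + τ) := by linarith [h.1]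
    have h2 : (r (ε + τ) - r ε) / r (ε + τ) ≤ M * ((ε + τ) * τ) / rc :=
      div_le_div₀ (by positivity) hu hrc hr1
    have h3 := h1.trans_le h2
    rw [div_lt_div_iff₀ (by positivity) hrc] at h3
    rw [← div_eq_mul_inv, ← Real.sqrt_div' _ (by positivity)]
    refine Real.sqrt_le_iff.mpr ⟨hN0.le, ?_⟩
    rw [div_div, div_le_iff₀ (by positivity)]
    linarith
end
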